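/- arXiv:2304.14169 — 2 statements merged into one kernel-verified Lean document; each statement's English description precedes it below -/
import Mathlib

section
/- Let α ∈ (0, 1] and 1 ≤ p < ∞. The problem of L_p-approximation on the Hölder classes F_d^α is polynomially tractable. More precisely, for p ≥ 2 there is a constant c > 0, depending only on α and p, such that for all d ≥ 2 and ε ∈ (0, 1/2), n(ε, F_d^α, L_p) ≤ c · d² · log²(d) · ε^{-p} · log⁴(ε^{-1}). -/
open MeasureTheory Real Finset

noncomputable section

/-- The unit cube `[0,1]^d`. -/
def cube (d : ℕ) : Set (Fin d → ℝ) := Set.univ.pi fun _ => Set.Icc 0 1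

/-- The trigonometric character `e^{2πi⟨k,x⟩}`. -/
def eK (d : ℕ) (k : Fin d → ℤ) (x : Fin d → ℝ) : ℂ :=
  Complex.exp (2 * Real.pi * Complex.I * ∑ i, (k i : ℂ) * (x i : ℂ))

/-- The Fourier coefficient `f̂(k) = ∫_{[0,1]^d} f(x) e^{-2πi⟨k,x⟩} dx`. -/
def fCoeff (d : ℕ) (f : (Fin d → ℝ) → ℂ) (k : Fin d → ℤ) : ℂ :=
  ∫ x in cube d, f x * Complex.exp (-(2 * Real.pi * Complex.I) * ∑ i, (k i : ℂ) * (x i : ℂ))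

/-- `f` is 1-periodic in each coordinate. -/
def Periodic1 (d : ℕ) (f : (Fin d → ℝ) → ℂ) : Prop :=
  ∀ (x : Fin d → ℝ) (i : Fin d), f (Function.update x i (x i + 1)) = f x

/-- The weight `max(1, log ‖k‖_∞)`. -/
def logWeight (d : ℕ) (k : Fin d → ℤ) : ℝ :=
  max 1 (Real.log ((Finset.univ.sup fun i => (k i).natAbs : ℕ) : ℝ))

/-- The class `F_d^log` of continuous 1-periodic functions with
`∑_k |f̂(k)| max(1, log ‖k‖_∞) ≤ 1`. -/
def FdLog (d : ℕ) : Set ((Fin d → ℝ) → ℂ) :=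
  {f | Continuous f ∧ Periodic1 d f ∧
    Summable (fun k : Fin d → ℤ => ‖fCoeff d f k‖ * logWeight d k) ∧
    ∑' k : Fin d → ℤ, ‖fCoeff d f k‖ * logWeight d k ≤ 1}

/-- The Hölder class `F_d^α`: continuous 1-periodic functions with absolutely summable
Fourier coefficients, `∑_k |f̂(k)| ≤ 1`, that are `α`-Hölder with constant 1 with respect
to the Euclidean norm on `ℝ^d`. -/
def FdAlpha (α : ℝ) (d : ℕ) : Set ((Fin d → ℝ) → ℂ) :=
  {f | Continuous f ∧ Periodic1 d f ∧
    Summable (fun k : Fin d → ℤ => ‖fCoeff d f k‖) ∧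
    (∑' k : Fin d → ℤ, ‖fCoeff d f k‖) ≤ 1 ∧
    ∀ x y : Fin d → ℝ, ‖f x - f y‖ ≤ Real.sqrt (∑ i, (x i - y i) ^ 2) ^ α}

/-! ### Fourier inversion -/

lemma per_int {d : ℕ} {f : (Fin d → ℝ) → ℂ} (hf : Periodic1 d f) (x : Fin d → ℝ) (i : Fin d)
    (n : ℤ) : f (Function.update x i (x i + n)) = f x := by
  have h : Function.Periodic (fun s : ℝ => f (Function.update x i s)) 1 := by
    intro s
    have := hf (Function.update x i s) i
    simpa using this
  have := h.int_mul n (x i)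
  simpa using this

lemma per_all {d : ℕ} {f : (Fin d → ℝ) → ℂ} (hf : Periodic1 d f) (x y : Fin d → ℝ)
    (h : ∀ i, ∃ n : ℤ, y i = x i + n) : f y = f x := by
  have key : ∀ s : Finset (Fin d), f (fun i => if i ∈ s then y i else x i) = f x := by
    intro s
    induction s using Finset.induction_on with
    | empty => simp
    | insert a s ha ih =>
      rw [← ih]
      obtain ⟨n, hn⟩ := h a
      rw [← per_int hf (fun i => if i ∈ s then y i else x i) a n]
      congr 1
      funext j
      by_cases hj : j = a
      · subst hj; simp [ha, hn]
      · simp [hj]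
  simpa using key Finset.univ

lemma exists_lift {d : ℕ} {f : (Fin d → ℝ) → ℂ} (hf : Periodic1 d f) (hc : Continuous f) :
    ∃ F : C(UnitAddTorus (Fin d), ℂ), ∀ x : Fin d → ℝ, F (fun i => (x i : UnitAddCircle)) = f x := by
  have hq : IsOpenQuotientMap (Pi.map (fun _ : Fin d => ((↑) : ℝ → UnitAddCircle))) :=
    IsOpenQuotientMap.piMap fun _ => QuotientAddGroup.isOpenQuotientMap_mk
  have hfac : Function.FactorsThrough f (Pi.map (fun _ : Fin d => ((↑) : ℝ → UnitAddCircle))) := by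
    intro x y hxy
    refine (per_all hf x y fun i => ?_).symm
    have := congrFun hxy i
    simp only [Pi.map_apply] at this
    obtain ⟨n, hn⟩ := (QuotientAddGroup.eq_iff_sub_mem.mp this.symm)
    refine ⟨n, ?_⟩
    simp at hn
    linarith
  let q : C(Fin d → ℝ, UnitAddTorus (Fin d)) :=
    ⟨Pi.map (fun _ : Fin d => ((↑) : ℝ → UnitAddCircle)), hq.continuous⟩
  have hq2 : Topology.IsQuotientMap q := hq.isQuotientMap
  refine ⟨hq2.lift ⟨f, hc⟩ hfac, fun x => ?_⟩
  exact congrFun (congrArg DFunLike.coe (hq2.lift_comp ⟨f, hc⟩ hfac)) x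

lemma mF_coe {d : ℕ} (k : Fin d → ℤ) (x : Fin d → ℝ) :
    UnitAddTorus.mFourier k (fun i => (x i : UnitAddCircle)) = eK d k x := by
  unfold UnitAddTorus.mFourier eK
  simp only [ContinuousMap.coe_mk, fourier_coe_apply]
  rw [← Complex.exp_sum, Finset.mul_sum]
  congr 1
  refine Finset.sum_congr rfl fun i _ => ?_
  push_cast
  ring

lemma hasSum_of_mem {d : ℕ} {f : (Fin d → ℝ) → ℂ} (hc : Continuous f) (hf : Periodic1 d f)
    (hs : Summable (fun k : Fin d → ℤ => ‖fCoeff d f k‖)) (x : Fin d → ℝ) :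
    HasSum (fun k => fCoeff d f k * eK d k x) (f x) := by
  obtain ⟨F, hF⟩ := exists_lift hf hc
  have hco : ∀ k, UnitAddTorus.mFourierCoeff F k = fCoeff d f k := by
    intro k
    rw [UnitAddTorus.mFourierCoeff_eq_integral F k (fun _ => 0)]
    unfold fCoeff
    have hset : (volume.restrict (cube d) : Measure (Fin d → ℝ)) =
        volume.restrict {x : Fin d → ℝ | ∀ i, x i ∈ Set.Ioc (0:ℝ) (0 + 1)} := by
      have h1 : {x : Fin d → ℝ | ∀ i, x i ∈ Set.Ioc (0:ℝ) (0 + 1)} =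
          Set.univ.pi fun i => Set.Ioc ((fun _ => 0 : Fin d → ℝ) i) ((fun _ => 1 : Fin d → ℝ) i) := by
        ext; simp [Set.mem_pi]
      have h2 : cube d = Set.Icc (fun _ => 0 : Fin d → ℝ) (fun _ => 1) := by
        unfold cube; rw [Set.pi_univ_Icc]
      rw [h1, h2]
      exact (Measure.restrict_congr_set Measure.univ_pi_Ioc_ae_eq_Icc).symm
    rw [hset]
    congr 1
    funext y
    rw [hF, mF_coe, smul_eq_mul, mul_comm]
    unfold eK
    congr 2
    simp only [Pi.neg_apply, Int.cast_neg, neg_mul, Finset.sum_neg_distrib, mul_neg]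
  have hsum : Summable (UnitAddTorus.mFourierCoeff F) := by
    refine Summable.of_norm ?_
    simpa only [hco] using hs
  have := UnitAddTorus.hasSum_mFourier_series_apply_of_summable hsum (fun i => (x i : UnitAddCircle))
  simpa only [hco, mF_coe, hF, smul_eq_mul] using this

lemma norm_eK {d : ℕ} (k : Fin d → ℤ) (x : Fin d → ℝ) : ‖eK d k x‖ = 1 := by
  unfold eK
  have : (2 * (Real.pi:ℂ) * Complex.I * ∑ i, (k i : ℂ) * (x i : ℂ)) =
      ((2 * Real.pi * ∑ i, (k i : ℝ) * x i : ℝ) : ℂ) * Complex.I := by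
    push_cast; ring
  rw [this, Complex.norm_exp_ofReal_mul_I]

lemma norm_le_one_of_mem {α : ℝ} {d : ℕ} {f : (Fin d → ℝ) → ℂ} (h : f ∈ FdAlpha α d)
    (x : Fin d → ℝ) : ‖f x‖ ≤ 1 := by
  obtain ⟨hc, hp, hs, h1, -⟩ := h
  have := hasSum_of_mem hc hp hs x
  rw [← this.tsum_eq]
  refine (norm_tsum_le_tsum_norm ?_).trans ?_
  · simpa [norm_eK] using hs
  · simpa [norm_eK] using h1

/-! ### The abstract finite recovery lemma -/

section Abstract

variable {X J : Type*} [Fintype X] [Nonempty X] [Fintype J]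

lemma hull_bdd {φ : J → X → ℝ} (hφ : ∀ j x, |φ j x| ≤ 1) {u : X → ℝ}
    (hu : u ∈ convexHull ℝ (Set.range φ)) (x : X) : |u x| ≤ 1 := by
  have hsub : Set.range φ ⊆ Set.Icc (fun _ => (-1:ℝ)) (fun _ => 1) := by
    rintro _ ⟨j, rfl⟩
    exact ⟨fun x => (abs_le.mp (hφ j x)).1, fun x => (abs_le.mp (hφ j x)).2⟩
  have := convexHull_min hsub (convex_Icc _ _) hu
  exact abs_le.mpr ⟨this.1 x, this.2 x⟩

lemma exp_quad {l y : ℝ} (hl0 : 0 ≤ l) (hl : l ≤ 1/2) (hy : |y| ≤ 2) :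
    Real.exp (l * y) ≤ 1 + l * y + 4 * l ^ 2 := by
  have h1 : |l * y| ≤ 1 := by
    rw [abs_mul, abs_of_nonneg hl0]
    nlinarith [abs_nonneg y]
  have h2 := Real.abs_exp_sub_one_sub_id_le h1
  have h3 := (abs_le.mp h2).2
  have h4 : (l * y) ^ 2 ≤ 4 * l ^ 2 := by
    rw [mul_pow]
    have : y ^ 2 ≤ 4 := by rw [← sq_abs]; nlinarith [abs_nonneg y]
    nlinarith [sq_nonneg l]
  linarith

lemma maurey {φ : J → X → ℝ} (hφ : ∀ j x, |φ j x| ≤ 1) {u : X → ℝ}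
    (hu : u ∈ convexHull ℝ (Set.range φ)) {l : ℝ} (hl0 : 0 ≤ l) (hl : l ≤ 1/2) (m : ℕ) :
    ∃ s : Fin m → J, ∑ x, (Real.exp (l * (∑ i, φ (s i) x - m * u x)) +
      Real.exp (-(l * (∑ i, φ (s i) x - m * u x)))) ≤
        2 * Fintype.card X * Real.exp (4 * l ^ 2 * m) := by
  induction m with
  | zero =>
    refine ⟨Fin.elim0, ?_⟩
    simp
    linarith
  | succ m ih =>
    obtain ⟨s, hs⟩ := ih
    set S : X → ℝ := fun x => ∑ i, φ (s i) x - m * u x with hS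
    set A : X → ℝ := fun x => Real.exp (l * S x) with hA
    set B : X → ℝ := fun x => Real.exp (-(l * S x)) with hB
    let ℓ : (X → ℝ) →ₗ[ℝ] ℝ := ∑ x, ((A x - B x) * l) • LinearMap.proj x
    have hℓ : ∀ v, ℓ v = ∑ x, ((A x - B x) * l) * v x := by
      intro v; simp [ℓ, LinearMap.sum_apply]
    have hconc : ConcaveOn ℝ Set.univ ℓ := ℓ.concaveOn convex_univ
    obtain ⟨_, ⟨j, rfl⟩, hj⟩ := hconc.exists_le_of_mem_convexHull (Set.subset_univ _) hu
    rw [hℓ, hℓ] at hj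
    refine ⟨Fin.snoc s j, ?_⟩
    have hpt : ∀ x, Real.exp (l * (∑ i, φ ((Fin.snoc s j : Fin (m+1) → J) i) x - (m+1:ℕ) * u x)) +
        Real.exp (-(l * (∑ i, φ ((Fin.snoc s j : Fin (m+1) → J) i) x - (m+1:ℕ) * u x))) ≤
        (1 + 4 * l ^ 2) * (A x + B x) + ((A x - B x) * l * φ j x - (A x - B x) * l * u x) := by
      intro x
      have e1 : ∑ i, φ ((Fin.snoc s j : Fin (m+1) → J) i) x - (m+1:ℕ) * u x
          = S x + (φ j x - u x) := by
        rw [Fin.sum_univ_castSucc]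
        simp only [Fin.snoc_castSucc, Fin.snoc_last, hS]
        push_cast; ring
      have hb : |φ j x - u x| ≤ 2 := by
        have h1 := abs_le.mp (hφ j x)
        have h2 := abs_le.mp (hull_bdd hφ hu x)
        rw [abs_le]; constructor <;> linarith [h1.1, h1.2, h2.1, h2.2]
      have q1 := exp_quad hl0 hl hb
      have q2 := exp_quad (y := -(φ j x - u x)) hl0 hl (by rwa [abs_neg])
      rw [e1, mul_add, neg_add, Real.exp_add, Real.exp_add, ← mul_neg l (φ j x - u x)]
      have ha : 0 ≤ A x := (Real.exp_pos _).le
      have hb : 0 ≤ B x := (Real.exp_pos _).le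
      have := mul_le_mul_of_nonneg_left q1 ha
      have := mul_le_mul_of_nonneg_left q2 hb
      simp only [hA, hB] at *
      nlinarith
    refine (Finset.sum_le_sum fun x _ => hpt x).trans ?_
    rw [Finset.sum_add_distrib, ← Finset.mul_sum, Finset.sum_sub_distrib]
    have h0 : (1 + 4 * l ^ 2) ≤ Real.exp (4 * l ^ 2) := by
      linarith [Real.add_one_le_exp (4 * l ^ 2)]
    have h1 : (1 + 4 * l ^ 2) * ∑ x, (A x + B x) ≤
        Real.exp (4 * l ^ 2) * (2 * Fintype.card X * Real.exp (4 * l ^ 2 * m)) := by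
      refine mul_le_mul h0 hs ?_ (Real.exp_pos _).le
      exact Finset.sum_nonneg fun x _ => add_nonneg (Real.exp_pos _).le (Real.exp_pos _).le
    have h2 : Real.exp (4 * l ^ 2) * (2 * Fintype.card X * Real.exp (4 * l ^ 2 * m)) =
        2 * Fintype.card X * Real.exp (4 * l ^ 2 * (m+1:ℕ)) := by
      have : 4 * l ^ 2 * ((m+1:ℕ):ℝ) = 4 * l ^ 2 + 4 * l ^ 2 * m := by push_cast; ring
      rw [this, Real.exp_add]; ring
    linarith

lemma maurey_unif {φ : J → X → ℝ} (hφ : ∀ j x, |φ j x| ≤ 1) {u : X → ℝ}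
    (hu : u ∈ convexHull ℝ (Set.range φ)) {t : ℝ} (ht0 : 0 < t) (ht : t ≤ 1) (m : ℕ)
    (hm : 256 * Real.log (2 * Fintype.card X) / t ^ 2 ≤ m) :
    ∃ s : Fin m → J, ∀ x, |∑ i, φ (s i) x - m * u x| ≤ m * (t / 4) := by
  obtain ⟨s, hs⟩ := maurey hφ hu (l := t / 32) (by positivity) (by linarith) m
  refine ⟨s, fun x => ?_⟩
  set S : X → ℝ := fun x => ∑ i, φ (s i) x - m * u x with hS
  have hcard : (0:ℝ) < Fintype.card X := by exact_mod_cast Fintype.card_pos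
  have h1 : Real.exp (t / 32 * |S x|) ≤ 2 * Fintype.card X * Real.exp (4 * (t/32) ^ 2 * m) := by
    refine le_trans ?_ hs
    refine le_trans ?_ (Finset.single_le_sum (f := fun x => Real.exp (t / 32 * S x) +
      Real.exp (-(t / 32 * S x)))
      (fun x _ => add_nonneg (Real.exp_pos _).le (Real.exp_pos _).le) (Finset.mem_univ x))
    rcases abs_cases (S x) with ⟨h, -⟩ | ⟨h, -⟩ <;> rw [h]
    · linarith [Real.exp_pos (-(t / 32 * S x))]
    · rw [mul_neg]; linarith [Real.exp_pos ((t / 32 * S x))]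
  have h2 : t / 32 * |S x| ≤ Real.log (2 * Fintype.card X) + 4 * (t/32) ^ 2 * m := by
    have := Real.log_le_log (Real.exp_pos _) h1
    rwa [Real.log_exp, Real.log_mul (by positivity) (Real.exp_pos _).ne', Real.log_exp] at this
  have h3 : 256 * Real.log (2 * Fintype.card X) ≤ m * t ^ 2 := by
    rwa [div_le_iff₀ (by positivity)] at hm
  have h4 : t * |S x| ≤ t * (m * (t / 4)) := by nlinarith
  exact le_of_mul_le_mul_left h4 ht0

lemma hitting {S : Type*} [Fintype S] (B : S → Finset X) (q : ℝ)
    (hB : ∀ s, q * Fintype.card X < (B s).card) (n : ℕ)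
    (hn : Fintype.card S * Real.exp (-(q * n)) < 1) :
    ∃ x : Fin n → X, ∀ s, ∃ i, x i ∈ B s := by
  classical
  by_contra hcon
  push Not at hcon
  have hcard : (0:ℝ) < Fintype.card X := by exact_mod_cast Fintype.card_pos
  have hsub : (Finset.univ : Finset (Fin n → X)) ⊆
      Finset.univ.biUnion fun s => Fintype.piFinset fun _ : Fin n => (B s)ᶜ := by
    intro x _
    obtain ⟨s, hs⟩ := hcon x
    simp only [Finset.mem_biUnion, Finset.mem_univ, true_and]
    exact ⟨s, by simpa [Fintype.mem_piFinset] using hs⟩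
  have h1 := (Finset.card_le_card hsub).trans Finset.card_biUnion_le
  simp only [Fintype.card_piFinset_const, Finset.card_univ, Fintype.card_pi, Finset.prod_const,
    Fintype.card_fin] at h1
  have h2 : (Fintype.card X : ℝ) ^ n ≤ ∑ s, (((B s)ᶜ.card : ℕ) : ℝ) ^ n := by exact_mod_cast h1
  have h3 : ∀ s, (((B s)ᶜ.card : ℕ) : ℝ) ^ n ≤ Real.exp (-(q * n)) * (Fintype.card X : ℝ) ^ n := by
    intro s
    have e : (((B s)ᶜ.card : ℕ) : ℝ) = Fintype.card X - (B s).card := by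
      rw [Finset.card_compl, Nat.cast_sub (Finset.card_le_univ _)]
    have e2 : (((B s)ᶜ.card : ℕ) : ℝ) ≤ Real.exp (-q) * Fintype.card X := by
      have := hB s
      have h5 := Real.add_one_le_exp (-q)
      rw [e]
      nlinarith
    calc _ ≤ (Real.exp (-q) * Fintype.card X) ^ n := by gcongr
      _ = _ := by
        rw [mul_pow, ← Real.exp_nat_mul]; congr 2; ring
  have h4 : (Fintype.card X : ℝ) ^ n ≤
      (Fintype.card S * Real.exp (-(q * n))) * (Fintype.card X : ℝ) ^ n := by
    refine h2.trans ((Finset.sum_le_sum fun s _ => h3 s).trans ?_)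
    rw [Finset.sum_const, nsmul_eq_mul, Finset.card_univ, mul_assoc]
  have h5 : (0:ℝ) < (Fintype.card X : ℝ) ^ n := by positivity
  nlinarith

lemma level {φ : J → X → ℝ} (hφ : ∀ j x, |φ j x| ≤ 1) {t q : ℝ} (ht0 : 0 < t) (ht : t ≤ 1)
    (m n : ℕ) (hm0 : 0 < m)
    (hm : 256 * Real.log (2 * Fintype.card X) / t ^ 2 ≤ m)
    (hn : (Fintype.card J : ℝ) ^ m * Real.exp (-(q * n)) < 1) :
    ∃ x : Fin n → X, ∀ u ∈ convexHull ℝ (Set.range φ), (∀ i, u (x i) = 0) →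
      ((Finset.univ.filter fun x => t < |u x|).card : ℝ) ≤ q * Fintype.card X := by
  classical
  let Bad : (Fin m → J) → Finset X := fun s =>
    Finset.univ.filter fun x => m * (t / 2) < |∑ i, φ (s i) x|
  let S := {s : Fin m → J // q * Fintype.card X < (Bad s).card}
  have hS : (Fintype.card S : ℝ) ≤ (Fintype.card J : ℝ) ^ m := by
    have := Fintype.card_subtype_le fun s : Fin m → J => q * Fintype.card X < (Bad s).card
    have h2 : Fintype.card (Fin m → J) = Fintype.card J ^ m := by simp
    rw [h2] at this
    exact_mod_cast this
  obtain ⟨x, hx⟩ := hitting (fun s : S => Bad s.1) q (fun s => s.2) n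
    (lt_of_le_of_lt (mul_le_mul_of_nonneg_right hS (Real.exp_pos _).le) hn)
  refine ⟨x, fun u hu hux => ?_⟩
  by_contra hcon
  push Not at hcon
  obtain ⟨s, hs⟩ := maurey_unif hφ hu ht0 ht m hm
  have hm' : (0:ℝ) < m := by exact_mod_cast hm0
  have hsub : (Finset.univ.filter fun x => t < |u x|) ⊆ Bad s := by
    intro y hy
    simp only [Bad, Finset.mem_filter, Finset.mem_univ, true_and] at hy ⊢
    have h1 := hs y
    have h2 : |(m:ℝ) * u y| = m * |u y| := by rw [abs_mul, abs_of_pos hm']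
    have h3 := abs_sub_abs_le_abs_sub ((m:ℝ) * u y) (∑ i, φ (s i) y)
    rw [abs_sub_comm] at h3
    nlinarith [mul_pos hm' ht0, mul_lt_mul_of_pos_left hy hm']
  have hlt : q * Fintype.card X < (Bad s).card :=
    lt_of_lt_of_le hcon (by exact_mod_cast Finset.card_le_card hsub)
  obtain ⟨i, hi⟩ := hx ⟨s, hlt⟩
  simp only [Bad, Finset.mem_filter, Finset.mem_univ, true_and] at hi
  have h1 := hs (x i)
  rw [hux i, mul_zero, sub_zero] at h1
  nlinarith [mul_pos hm' ht0]

lemma dyadic (v : ℝ) (hv : |v| ≤ 1) (L : ℕ) :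
    v ^ 2 ≤ (1/4:ℝ) ^ L + ∑ j ∈ Finset.range L, (1/4:ℝ) ^ j * (if (1/2:ℝ) ^ (j+1) < |v| then 1 else 0) := by
  induction L with
  | zero => simp; exact hv
  | succ L ih =>
    rw [Finset.sum_range_succ]
    have hnn : 0 ≤ ∑ j ∈ Finset.range L, (1/4:ℝ) ^ j * (if (1/2:ℝ) ^ (j+1) < |v| then (1:ℝ) else 0) :=
      Finset.sum_nonneg fun j _ => by split_ifs <;> positivity
    by_cases h : (1/2:ℝ) ^ (L+1) < |v|
    · simp only [h, if_true]
      have : (0:ℝ) ≤ (1/4:ℝ) ^ (L+1) := by positivity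
      linarith
    · simp only [h, if_false]
      have h2 : v ^ 2 ≤ (1/4:ℝ) ^ (L+1) := by
        rw [← sq_abs]
        have : (1/4:ℝ) = (1/2) ^ 2 := by norm_num
        rw [this, ← pow_mul, mul_comm, pow_mul]
        exact pow_le_pow_left₀ (abs_nonneg v) (not_lt.mp h) 2
      linarith

lemma abstract_recovery {φ : J → X → ℝ} (hφ : ∀ j x, |φ j x| ≤ 1) {r : ℝ} (hr : 0 < r)
    (hJ : 1 ≤ Fintype.card J) (L n : ℕ)
    (hn : 2048 * L * Real.log (2 * Fintype.card X) * Real.log (Fintype.card J) / r ^ 2 < n) :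
    ∃ x : Fin L × Fin n → X, ∀ u ∈ convexHull ℝ (Set.range φ), (∀ i, u (x i) = 0) →
      ∑ x, u x ^ 2 ≤ (r ^ 2 + (1/4) ^ L) * Fintype.card X := by
  classical
  have hX1 : (1:ℝ) ≤ Fintype.card X := by exact_mod_cast Fintype.card_pos
  have hJ1 : (1:ℝ) ≤ Fintype.card J := by exact_mod_cast hJ
  have hlX : 0.69 < Real.log (2 * Fintype.card X) := by
    have h1 : Real.log 2 ≤ Real.log (2 * Fintype.card X) :=
      Real.log_le_log (by norm_num) (by linarith)
    linarith [Real.log_two_gt_d9]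
  have hlJ : 0 ≤ Real.log (Fintype.card J) := Real.log_nonneg hJ1
  have hlev : ∀ j : Fin L, ∃ x : Fin n → X, ∀ u ∈ convexHull ℝ (Set.range φ), (∀ i, u (x i) = 0) →
      ((Finset.univ.filter fun x => (1/2:ℝ) ^ ((j:ℕ)+1) < |u x|).card : ℝ) ≤
        (r ^ 2 * 4 ^ (j:ℕ) / L) * Fintype.card X := by
    intro j
    have hL : (0:ℝ) < L := by exact_mod_cast (Nat.zero_le _).trans_lt j.2
    have h4 : (1:ℝ) ≤ 4 ^ (j:ℕ) := one_le_pow₀ (by norm_num)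
    set m := ⌈1024 * Real.log (2 * Fintype.card X) * 4 ^ (j:ℕ)⌉₊ with hmdef
    have hpos : 0 < 1024 * Real.log (2 * Fintype.card X) * 4 ^ (j:ℕ) := by positivity
    have hm1 : 1024 * Real.log (2 * Fintype.card X) * 4 ^ (j:ℕ) ≤ m := Nat.le_ceil _
    have hm2 : (m:ℝ) ≤ 2048 * Real.log (2 * Fintype.card X) * 4 ^ (j:ℕ) := by
      have := Nat.ceil_lt_add_one hpos.le
      nlinarith
    refine level hφ (by positivity) (pow_le_one₀ (by norm_num) (by norm_num)) m n
      (Nat.ceil_pos.mpr hpos) ?_ ?_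
    · refine le_trans (le_of_eq ?_) hm1
      rw [← pow_mul, mul_comm _ 2, pow_mul]
      norm_num
      rw [pow_succ, div_eq_iff (by positivity)]
      have : (4:ℝ) ^ (j:ℕ) * (1/4) ^ (j:ℕ) = 1 := by rw [← mul_pow]; norm_num
      linear_combination (-256 * Real.log (2 * Fintype.card X)) * this
    · have e1 : (Fintype.card J : ℝ) ^ m = Real.exp (m * Real.log (Fintype.card J)) := by
        rw [Real.exp_nat_mul, Real.exp_log (by linarith)]
      rw [e1, ← Real.exp_add, Real.exp_lt_one_iff]
      have h5 : 2048 * L * Real.log (2 * Fintype.card X) * Real.log (Fintype.card J) < n * r ^ 2 := by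
        rwa [div_lt_iff₀ (by positivity)] at hn
      have h6 : (m:ℝ) * Real.log (Fintype.card J) < r ^ 2 * 4 ^ (j:ℕ) / L * n := by
        calc (m:ℝ) * Real.log (Fintype.card J)
            ≤ 2048 * Real.log (2 * Fintype.card X) * 4 ^ (j:ℕ) * Real.log (Fintype.card J) := by
              gcongr
          _ < r ^ 2 * 4 ^ (j:ℕ) / L * n := by
              rw [div_mul_eq_mul_div, lt_div_iff₀ hL]
              nlinarith
      linarith
  choose x hx using hlev
  refine ⟨fun p => x p.1 p.2, fun u hu hux => ?_⟩
  have hcnt : ∀ j : Fin L, ∑ y, (1/4:ℝ) ^ (j:ℕ) * (if (1/2:ℝ) ^ ((j:ℕ)+1) < |u y| then (1:ℝ) else 0) ≤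
      r ^ 2 / L * Fintype.card X := by
    intro j
    have := hx j u hu (fun i => hux (j, i))
    rw [← Finset.mul_sum, Finset.sum_boole]
    calc _ ≤ (1/4:ℝ) ^ (j:ℕ) * ((r ^ 2 * 4 ^ (j:ℕ) / L) * Fintype.card X) := by gcongr
      _ = (4 ^ (j:ℕ) * (1/4:ℝ) ^ (j:ℕ)) * (r ^ 2 / L * Fintype.card X) := by ring
      _ = _ := by rw [← mul_pow]; norm_num
  calc ∑ y, u y ^ 2 ≤ ∑ y, ((1/4:ℝ) ^ L + ∑ j ∈ Finset.range L, (1/4:ℝ) ^ j *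
        (if (1/2:ℝ) ^ (j+1) < |u y| then 1 else 0)) :=
        Finset.sum_le_sum fun y _ => dyadic _ (hull_bdd hφ hu y) L
    _ = Fintype.card X * (1/4:ℝ) ^ L + ∑ j : Fin L, ∑ y, (1/4:ℝ) ^ (j:ℕ) *
        (if (1/2:ℝ) ^ ((j:ℕ)+1) < |u y| then (1:ℝ) else 0) := by
        rw [Finset.sum_add_distrib, Finset.sum_const, nsmul_eq_mul, Finset.card_univ,
          Finset.sum_comm, Finset.sum_range]
    _ ≤ Fintype.card X * (1/4:ℝ) ^ L + ∑ j : Fin L, r ^ 2 / L * Fintype.card X := by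
        gcongr with j _
        exact hcnt j
    _ ≤ _ := by
        rw [Finset.sum_const, nsmul_eq_mul, Finset.card_univ, Fintype.card_fin]
        rcases Nat.eq_zero_or_pos L with h | h
        · subst h
          have h0 : 0 ≤ r ^ 2 * Fintype.card X := by positivity
          simp only [Nat.cast_zero, zero_mul, pow_zero]
          linarith
        · have : (0:ℝ) < L := by exact_mod_cast h
          rw [show (L:ℝ) * (r ^ 2 / L * Fintype.card X) = r ^ 2 * Fintype.card X by field_simp]
          linarith

end Abstract

/-! ### The grid -/

section Grid

open scoped Pointwise

def gpt {d M : ℕ} (x : Fin d → Fin M) : Fin d → ℝ := fun i => ((x i : ℕ) : ℝ) / M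

def toR {X : Type*} (h : X → ℂ) : X × Bool → ℝ := fun p => if p.2 then (h p.1).re else (h p.1).im

def dict (d M : ℕ) (j : (Fin d → Fin M) × Fin 4) : (Fin d → Fin M) × Bool → ℝ :=
  toR fun x => Complex.I ^ (j.2 : ℕ) * eK d (fun i => ((j.1 i : ℕ) : ℤ)) (gpt x)

lemma abs_toR_le {X : Type*} (h : X → ℂ) (p : X × Bool) : |toR h p| ≤ ‖h p.1‖ := by
  unfold toR
  split_ifs
  · exact Complex.abs_re_le_norm _
  · exact Complex.abs_im_le_norm _

lemma dict_le (d M : ℕ) (j : (Fin d → Fin M) × Fin 4) (p : (Fin d → Fin M) × Bool) :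
    |dict d M j p| ≤ 1 := by
  refine (abs_toR_le _ _).trans ?_
  simp [norm_eK]

lemma eK_mod {d M : ℕ} (hM : 0 < M) (k : Fin d → ℤ) :
    ∃ k' : Fin d → Fin M, ∀ x : Fin d → Fin M,
      eK d k (gpt x) = eK d (fun i => ((k' i : ℕ) : ℤ)) (gpt x) := by
  have hM' : (0:ℤ) < M := by exact_mod_cast hM
  refine ⟨fun i => ⟨(k i % M).toNat, ?_⟩, fun x => ?_⟩
  · have h1 := Int.emod_lt_of_pos (k i) hM'
    have h2 := Int.emod_nonneg (k i) hM'.ne'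
    omega
  · unfold eK
    rw [Complex.exp_eq_exp_iff_exists_int]
    refine ⟨∑ i, (k i / M) * (x i : ℕ), ?_⟩
    have hMc : (M:ℂ) ≠ 0 := by exact_mod_cast hM.ne'
    have : ∀ i, (k i : ℂ) * ((gpt x i : ℝ) : ℂ) =
        ((((k i % M).toNat : ℕ) : ℤ) : ℂ) * ((gpt x i : ℝ) : ℂ) + (k i / M : ℤ) * ((x i : ℕ) : ℂ) := by
      intro i
      have h2 := Int.emod_nonneg (k i) hM'.ne'
      rw [Int.toNat_of_nonneg h2]
      have h3 : (k i : ℂ) = ((k i % M : ℤ) : ℂ) + (M : ℂ) * ((k i / M : ℤ) : ℂ) := by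
        exact_mod_cast (Int.emod_add_mul_ediv (k i) M).symm
      rw [h3]
      simp only [gpt]
      push_cast
      field_simp
    rw [Finset.sum_congr rfl fun i _ => this i, Finset.sum_add_distrib]
    push_cast
    ring

lemma toR_mem {d M : ℕ} (hM : 0 < M) (k : Fin d → ℤ) (s : Fin 4) :
    toR (fun x : Fin d → Fin M => Complex.I ^ (s:ℕ) * eK d k (gpt x)) ∈
      convexHull ℝ (Set.range (dict d M)) := by
  obtain ⟨k', hk'⟩ := eK_mod hM k
  refine subset_convexHull _ _ ⟨(k', s), ?_⟩
  unfold dict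
  congr 1
  funext x
  simp only [hk' x]

lemma zero_mem_hull {d M : ℕ} (hM : 0 < M) :
    (0 : (Fin d → Fin M) × Bool → ℝ) ∈ convexHull ℝ (Set.range (dict d M)) := by
  have h0 := toR_mem (d := d) hM 0 0
  have h2 := toR_mem (d := d) hM 0 2
  have := (convex_convexHull ℝ (Set.range (dict d M))) h0 h2
    (a := 1/2) (b := 1/2) (by norm_num) (by norm_num) (by norm_num)
  convert this using 1
  funext p
  simp only [toR, Pi.zero_apply, Pi.add_apply, Pi.smul_apply, smul_eq_mul]
  split_ifs <;> simp

lemma smul_mono {E : Type*} [AddCommGroup E] [Module ℝ E] {H : Set E} (hH : Convex ℝ H)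
    (h0 : (0:E) ∈ H) {a b : ℝ} (ha : 0 ≤ a) (hab : a ≤ b) : a • H ⊆ b • H := by
  have : b = a + (b - a) := by ring
  rw [this, hH.add_smul ha (sub_nonneg.mpr hab)]
  intro v hv
  rw [← add_zero v]
  exact Set.add_mem_add hv ⟨0, h0, smul_zero _⟩

lemma term_mem {d M : ℕ} (hM : 0 < M) (k : Fin d → ℤ) (c : ℂ) :
    toR (fun x : Fin d → Fin M => c * eK d k (gpt x)) ∈
      (2 * ‖c‖) • convexHull ℝ (Set.range (dict d M)) := by
  set H := convexHull ℝ (Set.range (dict d M)) with hHdef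
  have hH : Convex ℝ H := convex_convexHull _ _
  have h0 : (0 : (Fin d → Fin M) × Bool → ℝ) ∈ H := zero_mem_hull hM
  have key : ∀ (a : ℝ) (s : Fin 2), a • toR (fun x : Fin d → Fin M => Complex.I ^ (s:ℕ) * eK d k (gpt x))
      ∈ |a| • H := by
    intro a s
    rcases le_total 0 a with h | h
    · rw [abs_of_nonneg h]
      refine Set.smul_mem_smul_set ?_
      exact toR_mem hM k ⟨s, by omega⟩
    · rw [abs_of_nonpos h]
      have : a • toR (fun x : Fin d → Fin M => Complex.I ^ (s:ℕ) * eK d k (gpt x)) =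
          (-a) • toR (fun x : Fin d → Fin M => Complex.I ^ ((s:ℕ)+2) * eK d k (gpt x)) := by
        funext p
        simp only [toR, Pi.smul_apply, smul_eq_mul, pow_add, Complex.I_sq]
        split_ifs <;> simp <;> ring
      rw [this]
      refine Set.smul_mem_smul_set ?_
      exact toR_mem hM k ⟨s + 2, by omega⟩
  have hsplit : toR (fun x : Fin d → Fin M => c * eK d k (gpt x)) =
      c.re • toR (fun x : Fin d → Fin M => Complex.I ^ ((0 : Fin 2):ℕ) * eK d k (gpt x)) +
      c.im • toR (fun x : Fin d → Fin M => Complex.I ^ ((1 : Fin 2):ℕ) * eK d k (gpt x)) := by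
    funext p
    simp only [toR, Pi.add_apply, Pi.smul_apply, smul_eq_mul]
    split_ifs <;> simp
    ring
  rw [hsplit]
  refine smul_mono hH h0 (a := |c.re| + |c.im|) (by positivity) ?_ ?_
  · linarith [Complex.abs_re_le_norm c, Complex.abs_im_le_norm c]
  · rw [hH.add_smul (abs_nonneg _) (abs_nonneg _)]
    exact Set.add_mem_add (key _ 0) (key _ 1)

lemma sum_mem_hull {d M : ℕ} (hM : 0 < M) (c : (Fin d → ℤ) → ℂ) (s : Finset (Fin d → ℤ)) :
    ∑ k ∈ s, toR (fun x : Fin d → Fin M => c k * eK d k (gpt x)) ∈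
      (∑ k ∈ s, 2 * ‖c k‖) • convexHull ℝ (Set.range (dict d M)) := by
  classical
  induction s using Finset.induction_on with
  | empty =>
    simp only [Finset.sum_empty]
    exact ⟨0, zero_mem_hull hM, smul_zero _⟩
  | insert a s ha ih =>
    rw [Finset.sum_insert ha, Finset.sum_insert ha,
      (convex_convexHull ℝ (Set.range (dict d M))).add_smul (by positivity)
        (Finset.sum_nonneg fun _ _ => by positivity)]
    exact Set.add_mem_add (term_mem hM a (c a)) ih

lemma series_mem {d M : ℕ} (hM : 0 < M) (c : (Fin d → ℤ) → ℂ) (h : (Fin d → Fin M) → ℂ)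
    (hsum : ∀ x, HasSum (fun k => c k * eK d k (gpt x)) (h x))
    (hc : Summable fun k => ‖c k‖) (hc2 : ∑' k, ‖c k‖ ≤ 2) :
    toR h ∈ (4:ℝ) • convexHull ℝ (Set.range (dict d M)) := by
  have hclosed : IsClosed ((4:ℝ) • convexHull ℝ (Set.range (dict d M))) := by
    have h1 : IsCompact (convexHull ℝ (Set.range (dict d M))) :=
      Set.Finite.isCompact_convexHull ℝ (Set.finite_range (dict d M))
    exact (h1.smul (4:ℝ)).isClosed
  have hs : HasSum (fun k => toR (fun x : Fin d → Fin M => c k * eK d k (gpt x))) (toR h) := by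
    rw [Pi.hasSum]
    rintro ⟨x, b⟩
    cases b
    · simpa [toR] using Complex.hasSum_im (hsum x)
    · simpa [toR] using Complex.hasSum_re (hsum x)
  refine hclosed.mem_of_tendsto hs (Filter.Eventually.of_forall fun s => ?_)
  refine smul_mono (convex_convexHull _ _) (zero_mem_hull hM)
    (Finset.sum_nonneg fun _ _ => by positivity) ?_ (sum_mem_hull hM c s)
  rw [← Finset.mul_sum]
  have := hc.sum_le_tsum s (fun _ _ => norm_nonneg _)
  linarith

lemma grid_recovery {d M : ℕ} (hM : 0 < M) {r : ℝ} (hr : 0 < r) (L n : ℕ)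
    (hn : 2048 * L * Real.log (4 * (M:ℝ) ^ d) * Real.log (4 * (M:ℝ) ^ d) / r ^ 2 < n) :
    ∃ x : Fin L × Fin n → (Fin d → Fin M), ∀ (h : (Fin d → Fin M) → ℂ) (c : (Fin d → ℤ) → ℂ),
      (∀ x, HasSum (fun k => c k * eK d k (gpt x)) (h x)) →
      Summable (fun k => ‖c k‖) → ∑' k, ‖c k‖ ≤ 2 → (∀ i, h (x i) = 0) →
      ∑ x, ‖h x‖ ^ 2 ≤ 32 * (r ^ 2 + (1/4) ^ L) * (M:ℝ) ^ d := by
  have : Nonempty (Fin M) := ⟨⟨0, hM⟩⟩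
  have cX : (Fintype.card ((Fin d → Fin M) × Bool) : ℝ) = 2 * (M:ℝ) ^ d := by
    simp; ring
  have cJ : (Fintype.card ((Fin d → Fin M) × Fin 4) : ℝ) = 4 * (M:ℝ) ^ d := by
    simp; ring
  have hJ : 1 ≤ Fintype.card ((Fin d → Fin M) × Fin 4) := Fintype.card_pos
  obtain ⟨x, hx⟩ := abstract_recovery (dict_le d M) hr hJ L n (by
    rw [cX, cJ, show (2:ℝ) * (2 * (M:ℝ) ^ d) = 4 * (M:ℝ) ^ d by ring]; exact hn)
  refine ⟨fun i => (x i).1, fun h c hsum hc hc2 h0 => ?_⟩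
  obtain ⟨u, hu, hu4⟩ := series_mem hM c h hsum hc hc2
  have hval : ∀ p, toR h p = 4 * u p := fun p => by rw [← hu4]; rfl
  have := hx u hu (fun i => by
    have h1 := hval (x i)
    have h2 : toR h (x i) = 0 := by simp [toR, h0 i]
    linarith)
  rw [cX] at this
  have e : ∑ p, u p ^ 2 = (∑ y, ‖h y‖ ^ 2) / 16 := by
    rw [Fintype.sum_prod_type, Finset.sum_div]
    refine Finset.sum_congr rfl fun y _ => ?_
    rw [Fintype.sum_bool]
    have h1 := hval (y, true)
    have h2 := hval (y, false)
    simp only [toR, if_true, Bool.false_eq_true, if_false] at h1 h2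
    rw [Complex.sq_norm, Complex.normSq_apply, h1, h2]
    ring
  rw [e] at this
  linarith

end Grid

/-! ### From the grid to the cube -/

lemma exists_cell {M : ℕ} (hM : 0 < M) (y : ℝ) (hy : y ∈ Set.Icc (0:ℝ) 1) :
    ∃ j : Fin M, ((j:ℕ):ℝ) / M ≤ y ∧ y ≤ ((j:ℕ):ℝ) / M + 1 / M := by
  have hM' : (0:ℝ) < M := by exact_mod_cast hM
  rcases eq_or_lt_of_le hy.2 with h | h
  · refine ⟨⟨M - 1, by omega⟩, ?_⟩
    have : ((M - 1 : ℕ) : ℝ) = M - 1 := by rw [Nat.cast_sub hM]; simp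
    simp only [this]
    subst h
    constructor
    · rw [div_le_one hM']; linarith
    · rw [← add_div, sub_add_cancel, div_self hM'.ne']
  · have h0 : 0 ≤ y * M := mul_nonneg hy.1 hM'.le
    have h1 := Nat.floor_le h0
    have h2 := Nat.lt_floor_add_one (y * M)
    refine ⟨⟨⌊y * M⌋₊, ?_⟩, ?_, ?_⟩
    · rw [Nat.floor_lt h0]; nlinarith
    · rw [div_le_iff₀ hM']; exact h1
    · rw [← add_div, le_div_iff₀ hM']; exact h2.le

lemma gpt_mem {d M : ℕ} (x : Fin d → Fin M) : gpt x ∈ cube d := by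
  intro i _
  have h1 : ((x i : ℕ) : ℝ) ≤ M := by exact_mod_cast (x i).2.le
  exact ⟨by unfold gpt; positivity, div_le_one_of_le₀ h1 (by positivity)⟩

lemma lintegral_cells {d M : ℕ} (hM : 0 < M) (F : (Fin d → ℝ) → ENNReal)
    (G : (Fin d → Fin M) → ENNReal)
    (h : ∀ x y, (∀ i, gpt x i ≤ y i ∧ y i ≤ gpt x i + 1 / M) → F y ≤ G x) :
    ∫⁻ y in cube d, F y ≤ ∑ x, G x * ENNReal.ofReal (1 / (M:ℝ) ^ d) := by
  let cell : (Fin d → Fin M) → Set (Fin d → ℝ) := fun x =>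
    Set.Icc (gpt x) (fun i => gpt x i + 1 / M)
  have hcov : cube d ⊆ ⋃ x, cell x := by
    intro y hy
    choose j hj1 hj2 using fun i => exists_cell hM (y i) (hy i (Set.mem_univ i))
    exact Set.mem_iUnion.mpr ⟨j, fun i => hj1 i, fun i => hj2 i⟩
  refine (lintegral_mono_set hcov).trans ((lintegral_iUnion_le _ _).trans ?_)
  rw [tsum_fintype]
  refine Finset.sum_le_sum fun x _ => ?_
  calc ∫⁻ y in cell x, F y ≤ ∫⁻ y in cell x, G x :=
        setLIntegral_mono' measurableSet_Icc fun y hy => h x y fun i => ⟨hy.1 i, hy.2 i⟩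
    _ = G x * volume (cell x) := by rw [setLIntegral_const]
    _ = _ := by
        congr 1
        simp only [cell]
        rw [Real.volume_Icc_pi]
        simp only [add_sub_cancel_left, Finset.prod_const, Finset.card_univ, Fintype.card_fin]
        rw [← ENNReal.ofReal_pow (by positivity), one_div_pow]

lemma eLp_bound {d M : ℕ} (hM : 0 < M) {α p ε E : ℝ} (hα : 0 < α) (hp : 2 ≤ p) (hε : 0 < ε)
    {h : (Fin d → ℝ) → ℂ} (hb : ∀ y, ‖h y‖ ≤ 2)
    (hH : ∀ x y : Fin d → ℝ, ‖h x - h y‖ ≤ 2 * Real.sqrt (∑ i, (x i - y i) ^ 2) ^ α)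
    (hsum : ∑ x : Fin d → Fin M, ‖h (gpt x)‖ ^ 2 ≤ E * (M:ℝ) ^ d)
    (hE : (2:ℝ) ^ (p - 1) * (E + (2 * (Real.sqrt d / M) ^ α) ^ 2) ≤ ε ^ p) :
    eLpNorm h (ENNReal.ofReal p) (volume.restrict (cube d)) ≤ ENNReal.ofReal ε := by
  have hM' : (0:ℝ) < M := by exact_mod_cast hM
  set η : ℝ := 2 * (Real.sqrt d / M) ^ α with hη
  have hη0 : 0 ≤ η := by positivity
  have hp0 : 0 < p := by linarith
  have hpt : ∀ (x : Fin d → Fin M) (y : Fin d → ℝ),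
      (∀ i, gpt x i ≤ y i ∧ y i ≤ gpt x i + 1 / M) →
      ‖h y‖ ^ p ≤ (2:ℝ) ^ (p - 1) * (‖h (gpt x)‖ ^ 2 + η ^ 2) := by
    intro x y hxy
    have h1 : ‖h y - h (gpt x)‖ ≤ η := by
      refine (hH _ _).trans ?_
      rw [hη]
      gcongr
      rw [show Real.sqrt d / M = Real.sqrt (d * (1 / M) ^ 2) by
        rw [Real.sqrt_mul (by positivity), Real.sqrt_sq (by positivity)]; ring]
      apply Real.sqrt_le_sqrt
      calc ∑ i, (y i - gpt x i) ^ 2 ≤ ∑ _i : Fin d, (1 / (M:ℝ)) ^ 2 := by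
            refine Finset.sum_le_sum fun i _ => ?_
            have := hxy i
            exact pow_le_pow_left₀ (by linarith) (by linarith) 2
        _ = _ := by simp
    have h2 : ‖h y‖ ≤ ‖h (gpt x)‖ + η := by
      have := norm_le_norm_add_norm_sub' (h y) (h (gpt x))
      linarith
    have h3 : ‖h y‖ ^ 2 ≤ 2 * (‖h (gpt x)‖ ^ 2 + η ^ 2) := by
      have := pow_le_pow_left₀ (norm_nonneg _) h2 2
      nlinarith [sq_nonneg (‖h (gpt x)‖ - η)]
    have h4 : ‖h y‖ ^ p ≤ (2:ℝ) ^ (p - 2) * ‖h y‖ ^ 2 := by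
      rcases eq_or_lt_of_le (norm_nonneg (h y)) with h0 | h0
      · rw [← h0, Real.zero_rpow hp0.ne']; simp
      · have : ‖h y‖ ^ p = ‖h y‖ ^ (p - 2) * ‖h y‖ ^ 2 := by
          rw [← Real.rpow_natCast, ← Real.rpow_add h0]; norm_num
        rw [this]
        exact mul_le_mul_of_nonneg_right
          (Real.rpow_le_rpow (norm_nonneg _) (hb y) (by linarith)) (by positivity)
    calc ‖h y‖ ^ p ≤ (2:ℝ) ^ (p - 2) * ‖h y‖ ^ 2 := h4
      _ ≤ (2:ℝ) ^ (p - 2) * (2 * (‖h (gpt x)‖ ^ 2 + η ^ 2)) := by gcongr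
      _ = _ := by
        rw [show p - 1 = (p - 2) + 1 by ring, Real.rpow_add_one (by norm_num)]; ring
  have hint : ∫⁻ y in cube d, ‖h y‖ₑ ^ p ≤ ENNReal.ofReal (ε ^ p) := by
    refine (lintegral_cells hM (fun y => ‖h y‖ₑ ^ p)
      (fun x => ENNReal.ofReal ((2:ℝ) ^ (p - 1) * (‖h (gpt x)‖ ^ 2 + η ^ 2))) ?_).trans ?_
    · intro x y hxy
      rw [← ofReal_norm_eq_enorm, ENNReal.ofReal_rpow_of_nonneg (norm_nonneg _) hp0.le]
      exact ENNReal.ofReal_le_ofReal (hpt x y hxy)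
    · rw [← Finset.sum_mul, ← ENNReal.ofReal_sum_of_nonneg (fun x _ => by positivity),
        ← ENNReal.ofReal_mul (Finset.sum_nonneg fun x _ => by positivity)]
      refine ENNReal.ofReal_le_ofReal (le_trans ?_ hE)
      rw [← Finset.mul_sum, Finset.sum_add_distrib, Finset.sum_const, Finset.card_univ,
        nsmul_eq_mul, mul_assoc]
      have hc : (Fintype.card (Fin d → Fin M) : ℝ) = (M:ℝ) ^ d := by simp
      rw [hc]
      gcongr
      rw [mul_one_div, div_le_iff₀ (by positivity)]
      nlinarith
  rw [eLpNorm_eq_lintegral_rpow_enorm_toReal (by simpa using hp0) ENNReal.ofReal_ne_top,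
    ENNReal.toReal_ofReal hp0.le]
  calc _ ≤ (ENNReal.ofReal (ε ^ p)) ^ (1 / p) := by gcongr
    _ = ENNReal.ofReal ε := by
      rw [ENNReal.ofReal_rpow_of_pos (by positivity), ← Real.rpow_mul hε.le,
        mul_one_div_cancel hp0.ne', Real.rpow_one]

def Good (α p : ℝ) (d : ℕ) (ε : ℝ) (n : ℕ) : Prop :=
  ∃ (x : Fin n → (Fin d → ℝ)) (φ : (Fin n → ℂ) → ((Fin d → ℝ) → ℂ)),
    (∀ i, x i ∈ cube d) ∧
    ∀ f ∈ FdAlpha α d,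
      Continuous (fun t => f t - φ (fun i => f (x i)) t) ∧
      eLpNorm (fun t => f t - φ (fun i => f (x i)) t) (ENNReal.ofReal p)
          (volume.restrict (cube d)) ≤ ENNReal.ofReal ε

lemma good_of_params {d M : ℕ} (hM : 0 < M) {α p ε r : ℝ} (hα : 0 < α) (hp : 2 ≤ p) (hε : 0 < ε)
    (hr : 0 < r) (L n : ℕ)
    (hn : 2048 * L * Real.log (4 * (M:ℝ) ^ d) * Real.log (4 * (M:ℝ) ^ d) / r ^ 2 < n)
    (hE : (2:ℝ) ^ (p - 1) * (32 * (r ^ 2 + (1/4) ^ L) + (2 * (Real.sqrt d / M) ^ α) ^ 2) ≤ ε ^ p) :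
    Good α p d ε (L * n) := by
  classical
  obtain ⟨x, hx⟩ := grid_recovery (d := d) hM hr L n hn
  let X : Fin (L * n) → (Fin d → ℝ) := fun i => gpt (x (finProdFinEquiv.symm i))
  refine ⟨X, fun y => if h : ∃ g ∈ FdAlpha α d, ∀ i, g (X i) = y i then h.choose else 0,
    fun i => gpt_mem _, fun f hf => ?_⟩
  have hex : ∃ g ∈ FdAlpha α d, ∀ i, g (X i) = f (X i) := ⟨f, hf, fun _ => rfl⟩
  simp only [dif_pos hex]
  obtain ⟨hg, hgv⟩ := hex.choose_spec
  set g := hex.choose with hgdef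
  have hfb := norm_le_one_of_mem hf
  have hgb := norm_le_one_of_mem hg
  obtain ⟨fc, fp, fs, f1, fH⟩ := hf
  obtain ⟨gc, gp, gs, g1, gH⟩ := hg
  refine ⟨fc.sub gc, ?_⟩
  refine eLp_bound hM hα hp hε (h := fun t => f t - g t) (E := 32 * (r ^ 2 + (1/4) ^ L)) ?_ ?_ ?_ hE
  · intro y
    refine (norm_sub_le _ _).trans ?_
    linarith [hfb y, hgb y]
  · intro y z
    have : f y - g y - (f z - g z) = (f y - f z) - (g y - g z) := by ring
    rw [this]
    refine (norm_sub_le _ _).trans ?_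
    linarith [fH y z, gH y z]
  · have hle : ∀ k, ‖fCoeff d f k - fCoeff d g k‖ ≤ ‖fCoeff d f k‖ + ‖fCoeff d g k‖ :=
      fun k => norm_sub_le _ _
    have hs : Summable fun k => ‖fCoeff d f k - fCoeff d g k‖ :=
      Summable.of_nonneg_of_le (fun _ => norm_nonneg _) hle (fs.add gs)
    refine hx (fun y => f (gpt y) - g (gpt y)) (fun k => fCoeff d f k - fCoeff d g k) ?_ hs ?_ ?_
    · intro y
      simp only [sub_mul]
      exact (hasSum_of_mem fc fp fs _).sub (hasSum_of_mem gc gp gs _)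
    · refine (hs.tsum_le_tsum hle (fs.add gs)).trans ?_
      rw [fs.tsum_add gs]
      linarith
    · intro i
      have := hgv (finProdFinEquiv i)
      simp only [X, Equiv.symm_apply_apply] at this
      rw [this, sub_self]

/-! ### Choice of parameters -/

set_option maxHeartbeats 4000000 in
lemma core (α p : ℝ) (hα : 0 < α) (hp : 2 ≤ p) :
    ∃ c : ℝ, 0 < c ∧ ∀ (d : ℕ) (ε : ℝ), 1 ≤ d → 0 < ε → ε < 1/2 →
      ∃ n : ℕ, (n : ℝ) ≤ c * d ^ 2 * (1 + Real.log d) ^ 2 * ε ^ (-p) * Real.log ε⁻¹ ^ 4 ∧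
        Good α p d ε n := by
  set C1 : ℝ := 5 + (p + 1) / α with hC1
  have hC1pos : 0 < C1 := by positivity
  refine ⟨2049 * 64 * (2:ℝ) ^ p * (2 * p + 8) ^ 2 * C1 ^ 2, by positivity, ?_⟩
  intro d ε hd hε hε2
  have hd1 : (1:ℝ) ≤ d := by exact_mod_cast hd
  have hd0 : (0:ℝ) < d := by linarith
  set ℓ := Real.log ε⁻¹ with hℓ
  have hlog2 : (0.69:ℝ) < Real.log 2 := by linarith [Real.log_two_gt_d9]
  have hlog2' : Real.log 2 < 0.7 := by linarith [Real.log_two_lt_d9]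
  have hℓ2 : Real.log 2 ≤ ℓ := by
    refine Real.log_le_log (by norm_num) ?_
    rw [le_inv_comm₀ (by norm_num) hε]; linarith
  have hℓe : Real.log ε = -ℓ := by rw [hℓ, Real.log_inv]; ring
  set δ : ℝ := ε ^ p / 2 ^ p with hδ
  have hδ0 : 0 < δ := by positivity
  have hlδ : Real.log δ = -(p * ℓ) - p * Real.log 2 := by
    rw [hδ, Real.log_div (by positivity) (by positivity), Real.log_rpow hε,
      Real.log_rpow (by norm_num), hℓe]; ring
  have hδ1 : δ ≤ 1 := by
    have h1 : Real.log δ ≤ 0 := by rw [hlδ]; nlinarith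
    rwa [Real.log_nonpos_iff hδ0.le] at h1
  have hlogd : 0 ≤ Real.log d := Real.log_nonneg hd1
  -- L
  set a : ℝ := Real.log (64 / δ) with ha
  have ha' : a = 6 * Real.log 2 + p * ℓ + p * Real.log 2 := by
    rw [ha, Real.log_div (by norm_num) hδ0.ne', hlδ, show (64:ℝ) = 2 ^ 6 by norm_num, Real.log_pow]
    push_cast; ring
  have ha0 : 0 < a := by rw [ha']; nlinarith
  set L := ⌈a⌉₊ with hL
  have hLa : a ≤ L := Nat.le_ceil _
  have hL1 : (1:ℝ) ≤ L := by exact_mod_cast Nat.ceil_pos.mpr ha0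
  have hLu : (L:ℝ) ≤ (2 * p + 8) * ℓ := by
    have := Nat.ceil_lt_add_one ha0.le
    nlinarith
  have h4L : (1/4:ℝ) ^ L ≤ δ / 64 := by
    have e1 : 64 / δ ≤ 4 ^ L := by
      calc 64 / δ = Real.exp a := by rw [ha, Real.exp_log (by positivity)]
        _ ≤ Real.exp (L * 1) := Real.exp_le_exp.mpr (by linarith)
        _ = Real.exp 1 ^ L := by rw [Real.exp_nat_mul]
        _ ≤ 4 ^ L := pow_le_pow_left₀ (Real.exp_pos _).le (by linarith [Real.exp_one_lt_d9]) _
    rw [one_div_pow, one_div, inv_le_comm₀ (by positivity) (by positivity), inv_div]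
    exact e1
  -- M
  set b : ℝ := d * (4 / δ) ^ (1 / (2 * α)) with hb
  have hX1 : 1 ≤ (4 / δ) ^ (1 / (2 * α)) := by
    apply Real.one_le_rpow _ (by positivity)
    rw [one_le_div hδ0]; linarith
  have hb1 : 1 ≤ b := by rw [hb]; nlinarith
  set M := ⌈b⌉₊ with hMd
  have hMb : b ≤ M := Nat.le_ceil _
  have hM0 : 0 < M := Nat.ceil_pos.mpr (by linarith)
  have hM1 : (1:ℝ) ≤ M := by linarith
  have hMu : (M:ℝ) ≤ 2 * b := by
    have := Nat.ceil_lt_add_one (by linarith : (0:ℝ) ≤ b)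
    linarith
  have hlb : Real.log b ≤ Real.log d + (p + 1) / α * ℓ := by
    rw [hb, Real.log_mul hd0.ne' (by positivity), Real.log_rpow (by positivity),
      Real.log_div (by norm_num) hδ0.ne', hlδ, show (4:ℝ) = 2 ^ 2 by norm_num, Real.log_pow]
    have e : (p + 1) / α * ℓ = 1 / (2 * α) * ((2 * p + 2) * ℓ) := by field_simp
    rw [e]
    gcongr
    push_cast
    nlinarith
  set Λ := Real.log (4 * (M:ℝ) ^ d) with hΛ
  have hΛe : Λ = 2 * Real.log 2 + d * Real.log M := by
    rw [hΛ, Real.log_mul (by norm_num) (by positivity), Real.log_pow,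
      show (4:ℝ) = 2 ^ 2 by norm_num, Real.log_pow]; push_cast; ring
  have hlM0 : 0 ≤ Real.log M := Real.log_nonneg hM1
  have hΛ1 : 1 ≤ Λ := by rw [hΛe]; nlinarith
  have hlM : Real.log M ≤ ℓ + Real.log d + (p + 1) / α * ℓ := by
    have := Real.log_le_log (by linarith) hMu
    rw [Real.log_mul (by norm_num) (by linarith)] at this
    linarith
  have hΛu : Λ ≤ C1 * d * ℓ * (1 + Real.log d) := by
    have h1 : Real.log d ≤ 2 * ℓ * Real.log d := by nlinarith
    have h2 : 2 * Real.log 2 ≤ d * (2 * ℓ) := by nlinarith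
    have h3 : (d:ℝ) * Real.log M ≤ d * (ℓ + 2 * ℓ * Real.log d + (p + 1) / α * ℓ) := by
      gcongr; linarith
    have h4 : Λ ≤ d * (3 * ℓ + 2 * ℓ * Real.log d + (p + 1) / α * ℓ) := by
      rw [hΛe]; linarith
    have hq : 0 ≤ (p + 1) / α := by positivity
    have hℓ0 : 0 ≤ ℓ := by linarith
    have h5 : 3 * ℓ + 2 * ℓ * Real.log d + (p + 1) / α * ℓ ≤ C1 * ℓ * (1 + Real.log d) := by
      rw [hC1]
      have := mul_nonneg hℓ0 hlogd
      have := mul_nonneg hq this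
      nlinarith
    calc Λ ≤ d * (3 * ℓ + 2 * ℓ * Real.log d + (p + 1) / α * ℓ) := h4
      _ ≤ d * (C1 * ℓ * (1 + Real.log d)) := by gcongr
      _ = _ := by ring
  -- r
  set r : ℝ := Real.sqrt (δ / 64) with hr
  have hr0 : 0 < r := Real.sqrt_pos.mpr (by positivity)
  have hr2 : r ^ 2 = δ / 64 := Real.sq_sqrt (by positivity)
  set w : ℝ := 2048 * L * Λ * Λ / r ^ 2 with hw
  have hw0 : 0 ≤ w := by positivity
  set n := ⌊w⌋₊ + 1 with hn
  have hnw : w < n := by rw [hn]; push_cast; exact Nat.lt_floor_add_one w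
  have hnu : (n:ℝ) ≤ 2049 * L * Λ * Λ / r ^ 2 := by
    have h1 : (n:ℝ) ≤ w + 1 := by rw [hn]; push_cast; linarith [Nat.floor_le hw0]
    have h2 : 1 ≤ L * Λ * Λ / r ^ 2 := by
      rw [one_le_div (by positivity), hr2]
      have : 1 ≤ (L:ℝ) * Λ := one_le_mul_of_one_le_of_one_le hL1 hΛ1
      have := one_le_mul_of_one_le_of_one_le this hΛ1
      linarith
    have h3 : 2049 * L * Λ * Λ / r ^ 2 = w + L * Λ * Λ / r ^ 2 := by rw [hw]; ring
    linarith
  refine ⟨L * n, ?_, good_of_params hM0 hα hp hε hr0 L n hnw ?_⟩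
  · push_cast
    have hℓ0 : 0 ≤ ℓ := by linarith
    have hεp : 1 / r ^ 2 = 64 * 2 ^ p * ε ^ (-p) := by
      rw [hr2, hδ, Real.rpow_neg hε.le]; field_simp
    calc (L:ℝ) * n ≤ L * (2049 * L * Λ * Λ / r ^ 2) := by gcongr
      _ = 2049 * L ^ 2 * Λ ^ 2 * (1 / r ^ 2) := by ring
      _ ≤ 2049 * ((2 * p + 8) * ℓ) ^ 2 * (C1 * d * ℓ * (1 + Real.log d)) ^ 2 * (1 / r ^ 2) := by
          gcongr
      _ = _ := by rw [hεp]; ring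
  · have hη : (2 * (Real.sqrt d / M) ^ α) ^ 2 ≤ δ := by
      have h1 : Real.sqrt d / M ≤ (δ / 4) ^ (1 / (2 * α)) := by
        have e : (δ / 4) ^ (1 / (2 * α)) = ((4 / δ) ^ (1 / (2 * α)))⁻¹ := by
          rw [← Real.inv_rpow (by positivity), inv_div]
        rw [e, div_le_iff₀ (by linarith), inv_mul_eq_div, le_div_iff₀ (by positivity)]
        refine le_trans ?_ hMb
        rw [hb]
        gcongr
        rw [Real.sqrt_le_left (by linarith)]
        nlinarith
      have h2 : ((Real.sqrt d / M) ^ α) ≤ (δ / 4) ^ (1/2 : ℝ) := by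
        calc _ ≤ ((δ / 4) ^ (1 / (2 * α))) ^ α := by gcongr
          _ = _ := by
            rw [← Real.rpow_mul (by positivity)]; congr 1; field_simp
      have h3 : ((δ / 4) ^ (1/2 : ℝ)) ^ 2 = δ / 4 := by
        rw [← Real.sqrt_eq_rpow, Real.sq_sqrt (by positivity)]
      have h4 := pow_le_pow_left₀ (by positivity) h2 2
      rw [h3] at h4
      rw [mul_pow]
      linarith
    have e : ε ^ p = (2:ℝ) ^ (p - 1) * (2 * δ) := by
      have : (2:ℝ) ^ p = 2 ^ (p - 1) * 2 := by
        rw [← Real.rpow_add_one (by norm_num)]; norm_num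
      rw [hδ, this]; field_simp
    rw [e, hr2]
    gcongr
    linarith


lemma vol_cube (d : ℕ) : volume (cube d) = 1 := by
  have h2 : cube d = Set.Icc (fun _ => 0 : Fin d → ℝ) (fun _ => 1) := by
    unfold cube; rw [Set.pi_univ_Icc]
  rw [h2, Real.volume_Icc_pi]
  simp

lemma part_one (α p : ℝ) (hα : 0 < α) (hp : 1 ≤ p) :
    ∃ C q r : ℝ, 0 ≤ C ∧ 0 ≤ q ∧ 0 ≤ r ∧
        ∀ (d : ℕ) (ε : ℝ), 1 ≤ d → 0 < ε →
          ∃ n : ℕ, (n : ℝ) ≤ C * (d : ℝ) ^ q * ε ^ (-r) ∧ Good α p d ε n := by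
  set p' := max p 2 with hp'
  have hp2 : 2 ≤ p' := le_max_right _ _
  obtain ⟨c, hc, H⟩ := core α p' hα hp2
  refine ⟨c * 2 ^ (p' + 4), 4, p' + 4, by positivity, by norm_num, by linarith, ?_⟩
  intro d ε hd hε
  have hprob : IsProbabilityMeasure (volume.restrict (cube d)) :=
    ⟨by rw [Measure.restrict_apply_univ, vol_cube]⟩
  rcases lt_or_ge ε 1 with h1 | h1
  · obtain ⟨n, hn, x, φ, hx, hφ⟩ := H d (ε / 2) hd (by positivity) (by linarith)
    refine ⟨n, hn.trans ?_, x, φ, hx, fun f hf => ⟨(hφ f hf).1, ?_⟩⟩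
    · have hd1 : (1:ℝ) ≤ d := by exact_mod_cast hd
      have hlogd : 0 ≤ Real.log d := Real.log_nonneg hd1
      have h2 : 1 + Real.log d ≤ d := by
        linarith [Real.log_le_sub_one_of_pos (by linarith : (0:ℝ) < d)]
      have he : 0 < ε / 2 := by positivity
      have h3 : Real.log (ε / 2)⁻¹ ≤ (ε / 2)⁻¹ := by
        linarith [Real.log_le_sub_one_of_pos (inv_pos.mpr he)]
      have h4 : 0 ≤ Real.log (ε / 2)⁻¹ :=
        Real.log_nonneg ((one_le_inv₀ he).mpr (by linarith))
      calc c * d ^ 2 * (1 + Real.log d) ^ 2 * (ε / 2) ^ (-p') * Real.log (ε / 2)⁻¹ ^ 4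
          ≤ c * d ^ 2 * d ^ 2 * (ε / 2) ^ (-p') * (ε / 2)⁻¹ ^ 4 := by gcongr
        _ = c * d ^ 4 * (ε / 2) ^ (-(p' + 4)) := by
          have : (ε / 2) ^ (-(p' + 4)) = (ε / 2) ^ (-p') * (ε / 2)⁻¹ ^ 4 := by
            rw [neg_add, Real.rpow_add he, Real.rpow_neg he.le 4, inv_pow]
            norm_cast
          rw [this]; ring
        _ = _ := by
          rw [Real.div_rpow hε.le (by norm_num), Real.rpow_neg (by norm_num : (0:ℝ) ≤ 2)]
          have : (d:ℝ) ^ (4:ℝ) = (d:ℝ) ^ 4 := by norm_cast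
          rw [this]
          field_simp
    · refine (eLpNorm_le_eLpNorm_of_exponent_le (q := ENNReal.ofReal p')
        (ENNReal.ofReal_le_ofReal (le_max_left _ _))
        (hφ f hf).1.aestronglyMeasurable).trans ?_
      refine (hφ f hf).2.trans (ENNReal.ofReal_le_ofReal (by linarith))
  · refine ⟨0, by simp; positivity, Fin.elim0, fun _ => 0, fun i => i.elim0, fun f hf => ?_⟩
    simp only [Pi.zero_apply, sub_zero]
    refine ⟨hf.1, ?_⟩
    refine (eLpNorm_le_of_ae_bound (C := 1)
      (Filter.Eventually.of_forall (norm_le_one_of_mem hf))).trans ?_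
    simp only [measure_univ, ENNReal.one_rpow, one_mul]
    exact ENNReal.ofReal_le_ofReal h1

/-- Corollary `cor:Hoelder`: for `α ∈ (0,1]` and `1 ≤ p < ∞`,
`L_p`-approximation on `F_d^α` is polynomially tractable; more precisely, for `p ≥ 2`
there is `c > 0` (depending only on `α` and `p`) with
`n(ε, F_d^α, L_p) ≤ c d² log²(d) ε^{-p} log⁴(ε⁻¹)` for all `d ≥ 2`, `ε ∈ (0,1/2)`. -/
theorem statement8 :
    ∀ (α p : ℝ), α ∈ Set.Ioc (0 : ℝ) 1 → 1 ≤ p →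
      ((∃ C q r : ℝ, 0 ≤ C ∧ 0 ≤ q ∧ 0 ≤ r ∧
        ∀ (d : ℕ) (ε : ℝ), 1 ≤ d → 0 < ε →
          ∃ n : ℕ, (n : ℝ) ≤ C * (d : ℝ) ^ q * ε ^ (-r) ∧
            ∃ (x : Fin n → (Fin d → ℝ)) (φ : (Fin n → ℂ) → ((Fin d → ℝ) → ℂ)),
              (∀ i, x i ∈ cube d) ∧
              ∀ f ∈ FdAlpha α d,
                eLpNorm (fun t => f t - φ (fun i => f (x i)) t) (ENNReal.ofReal p)
                    (volume.restrict (cube d)) ≤ ENNReal.ofReal ε) ∧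
      (2 ≤ p →
        ∃ c : ℝ, 0 < c ∧
          ∀ (d : ℕ) (ε : ℝ), 2 ≤ d → ε ∈ Set.Ioo (0 : ℝ) (1/2) →
            ∃ n : ℕ,
              (n : ℝ) ≤ c * d ^ 2 * Real.log d ^ 2 * ε ^ (-p) * Real.log ε⁻¹ ^ 4 ∧
              ∃ (x : Fin n → (Fin d → ℝ)) (φ : (Fin n → ℂ) → ((Fin d → ℝ) → ℂ)),
                (∀ i, x i ∈ cube d) ∧
                ∀ f ∈ FdAlpha α d,
                  eLpNorm (fun t => f t - φ (fun i => f (x i)) t) (ENNReal.ofReal p)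
                      (volume.restrict (cube d)) ≤ ENNReal.ofReal ε)) := by
  intro α p hα hp
  refine ⟨?_, fun hp2 => ?_⟩
  · obtain ⟨C, q, r, h1, h2, h3, H⟩ := part_one α p hα.1 hp
    refine ⟨C, q, r, h1, h2, h3, fun d ε hd hε => ?_⟩
    obtain ⟨n, hn, x, φ, hx, hφ⟩ := H d ε hd hε
    exact ⟨n, hn, x, φ, hx, fun f hf => (hφ f hf).2⟩
  · obtain ⟨c, hc, H⟩ := core α p hα.1 hp2
    refine ⟨9 * c, by positivity, fun d ε hd hε => ?_⟩
    obtain ⟨n, hn, x, φ, hx, hφ⟩ := H d ε (by omega) hε.1 hε.2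
    refine ⟨n, hn.trans ?_, x, φ, hx, fun f hf => (hφ f hf).2⟩
    have hd2 : (2:ℝ) ≤ d := by exact_mod_cast hd
    have h1 : Real.log 2 ≤ Real.log d := Real.log_le_log (by norm_num) hd2
    have h2 : 1 + Real.log d ≤ 3 * Real.log d := by linarith [Real.log_two_gt_d9]
    have h0 : 0 ≤ 1 + Real.log d := by linarith [Real.log_two_gt_d9]
    have hε0 := hε.1
    calc c * d ^ 2 * (1 + Real.log d) ^ 2 * ε ^ (-p) * Real.log ε⁻¹ ^ 4
        ≤ c * d ^ 2 * (3 * Real.log d) ^ 2 * ε ^ (-p) * Real.log ε⁻¹ ^ 4 := by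
          have : 0 ≤ Real.log ε⁻¹ ^ 4 := by positivity
          gcongr
      _ = _ := by ring
end
end

section
/- The problem of recovery in the uniform norm on the classes F_d^log suffers from the curse of dimensionality, even for algorithms using arbitrary adaptive linear information: for every d ∈ ℕ, every n ≤ 5^d/2, and every map A_n : F_d^log → L_∞([0,1]^d) of the form A_n(f) = φ(L₁(f), …, Lₙ(f)), where each L_i is a linear functional that may be chosen adaptively depending on the previously computed values L₁(f), …, L_{i−1}(f), and φ : ℂⁿ → L_∞([0,1]^d) is arbitrary, one has sup_{f ∈ F_d^log} ‖f − A_n(f)‖_∞ ≥ 1/√2. In particular, this lower bound holds for every sampling algorithm A_n(f) = φ(f(x₁),…,f(xₙ)) with n ≤ 5^d/2 points x₁,…,xₙ ∈ [0,1]^d. -/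
open MeasureTheory Real Finset

noncomputable section

/-- The information vector produced by adaptive linear information: `L i` is the linear
functional used in step `i`, chosen depending on the previously computed values. -/
def infoVec {V : Type*} [AddCommGroup V] [Module ℂ V] {n : ℕ}
    (L : (i : Fin n) → (Fin i.1 → ℂ) → (V →ₗ[ℂ] ℂ)) (f : V) : (i : Fin n) → ℂ
  | i => L i (fun j => infoVec L f ⟨j.1, j.2.trans i.2⟩) f
termination_by i => i.1
decreasing_by exact j.2

lemma hb_ext {K : Type*} [Fintype K] [DecidableEq K] {V : Type*} [AddCommGroup V] [Module ℂ V]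
    (ε : ℝ) (hε : 0 ≤ ε) (T : (K → ℂ) →ₗ[ℂ] V) (φ : (K → ℂ) →ₗ[ℂ] ℂ)
    (h : ∀ c, T c = 0 → ‖φ c‖ ≤ ε * ∑ k, ‖c k‖) :
    ∃ b : K → ℂ, (∀ k, ‖b k‖ ≤ ε) ∧ ∀ c, T c = 0 → φ c = ∑ k, c k * b k := by
  let e : PiLp 1 (fun _ : K => ℂ) ≃ₗ[ℂ] (K → ℂ) := WithLp.linearEquiv 1 ℂ (K → ℂ)
  let p : Subspace ℂ (PiLp 1 (fun _ : K => ℂ)) := LinearMap.ker (T ∘ₗ e.toLinearMap)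
  let f0 : p →ₗ[ℂ] ℂ := φ ∘ₗ e.toLinearMap ∘ₗ p.subtype
  have hf0 : ∀ x : p, ‖f0 x‖ ≤ ε * ‖x‖ := by
    intro x
    have hx : T (e x) = 0 := x.2
    have := h _ hx
    change _ ≤ ε * ‖(x : PiLp 1 (fun _ : K => ℂ))‖
    rw [PiLp.norm_eq_of_L1]
    exact this
  obtain ⟨g, hg, hgn⟩ := exists_extension_norm_eq p (f0.mkContinuous ε hf0)
  have hgε : ‖g‖ ≤ ε := hgn ▸ LinearMap.mkContinuous_norm_le _ hε _
  refine ⟨fun k => g (PiLp.single 1 k 1), fun k => ?_, fun c hc => ?_⟩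
  · refine (g.le_opNorm _).trans ?_
    rw [PiLp.norm_single]
    simpa using hgε
  · have hcp : e.symm c ∈ p := by
      change T (e (e.symm c)) = 0
      simpa using hc
    have h1 := hg ⟨e.symm c, hcp⟩
    have h2 : (f0.mkContinuous ε hf0) ⟨e.symm c, hcp⟩ = φ c := by
      change φ (e (e.symm c)) = φ c
      simp
    rw [← h2, ← h1]
    have h3 : e.symm c = ∑ k, c k • (PiLp.single 1 k (1:ℂ) : PiLp 1 (fun _ : K => ℂ)) := by
      apply e.injective
      ext i
      simp [e, Finset.sum_apply, Pi.single_apply]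
    change g (e.symm c) = _
    rw [h3]
    simp

lemma parseval_aux {K : Type*} [Fintype K] [DecidableEq K] (F : K → K → ℂ)
    (hF : ∀ k l, ∑ j, (starRingEnd ℂ) (F j k) * F j l = if k = l then (Fintype.card K : ℂ) else 0)
    (c : K → ℂ) :
    ∑ j, ‖∑ k, c k * F j k‖ ^ 2 = (Fintype.card K : ℝ) * ∑ k, ‖c k‖ ^ 2 := by
  have key : (∑ j, ((starRingEnd ℂ) (∑ k, c k * F j k)) * (∑ k, c k * F j k))
      = (Fintype.card K : ℂ) * ∑ k, (starRingEnd ℂ) (c k) * c k := by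
    calc _ = ∑ j, ∑ k, ∑ l, (starRingEnd ℂ) (c k) * c l * ((starRingEnd ℂ) (F j k) * F j l) := by
          refine Finset.sum_congr rfl fun j _ => ?_
          rw [map_sum, Finset.sum_mul_sum]
          refine Finset.sum_congr rfl fun k _ => Finset.sum_congr rfl fun l _ => ?_
          rw [map_mul]; ring
      _ = ∑ k, ∑ l, (starRingEnd ℂ) (c k) * c l * ∑ j, ((starRingEnd ℂ) (F j k) * F j l) := by
          rw [Finset.sum_comm]
          refine Finset.sum_congr rfl fun k _ => ?_
          rw [Finset.sum_comm]
          refine Finset.sum_congr rfl fun l _ => ?_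
          rw [Finset.mul_sum]
      _ = _ := by
          simp only [hF]
          simp [Finset.mul_sum, mul_comm]
  simp only [← Complex.normSq_eq_conj_mul_self, Complex.normSq_eq_norm_sq] at key
  exact_mod_cast key

lemma width_aux {K : Type*} [Fintype K] [DecidableEq K] {n : ℕ} (F : K → K → ℂ)
    (hF : ∀ k l, ∑ j, (starRingEnd ℂ) (F j k) * F j l = if k = l then (Fintype.card K : ℂ) else 0)
    (T : (K → ℂ) →ₗ[ℂ] (Fin n → ℂ)) (hn : 2 * n < Fintype.card K) :
    ∃ c, T c = 0 ∧ ∃ j, (1 / √2) * ∑ k, ‖c k‖ < ‖∑ k, c k * F j k‖ := by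
  by_contra hcon
  push Not at hcon
  have hb : ∀ j, ∃ b : K → ℂ, (∀ k, ‖b k‖ ≤ 1 / √2) ∧
      ∀ c, T c = 0 → ∑ k, c k * F j k = ∑ k, c k * b k := by
    intro j
    let φ : (K → ℂ) →ₗ[ℂ] ℂ := ∑ k, F j k • LinearMap.proj k
    have hφ : ∀ c, φ c = ∑ k, c k * F j k := by
      intro c; simp [φ, mul_comm]
    obtain ⟨b, h1, h2⟩ := hb_ext (1 / √2) (by positivity) T φ (fun c hc => by
      rw [hφ]; exact hcon c hc j)
    exact ⟨b, h1, fun c hc => by rw [← hφ]; exact h2 c hc⟩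
  choose b hb1 hb2 using hb
  let e : EuclideanSpace ℂ K ≃ₗ[ℂ] (K → ℂ) := WithLp.linearEquiv 2 ℂ (K → ℂ)
  let W : Submodule ℂ (EuclideanSpace ℂ K) := LinearMap.ker (T ∘ₗ e.toLinearMap)
  set N := Fintype.card K with hN
  have hdim : N ≤ n + Module.finrank ℂ W := by
    have h1 := LinearMap.finrank_range_add_finrank_ker (T ∘ₗ e.toLinearMap)
    have h2 : Module.finrank ℂ (T ∘ₗ e.toLinearMap).range ≤ n := by
      simpa using Submodule.finrank_le (T ∘ₗ e.toLinearMap).range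
    rw [finrank_euclideanSpace] at h1
    change _ + Module.finrank ℂ W = _ at h1
    omega
  set m := Module.finrank ℂ W with hm
  let w : OrthonormalBasis (Fin m) ℂ W := stdOrthonormalBasis ℂ W
  have hw : Orthonormal ℂ (fun i => (w i : EuclideanSpace ℂ K)) :=
    w.orthonormal.comp_linearIsometry W.subtypeₗᵢ
  -- lower
  have hlow : ∀ l, ∑ j, ‖∑ k, e (w l) k * b j k‖ ^ 2 = N := by
    intro l
    have hTl : T (e (w l)) = 0 := (w l).2
    have h1 := parseval_aux F hF (e (w l))
    have h2 : ∑ k, ‖e (w l) k‖ ^ 2 = 1 := by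
      have := EuclideanSpace.norm_sq_eq (w l : EuclideanSpace ℂ K)
      have h5 : ‖(w l : EuclideanSpace ℂ K)‖ = 1 := hw.1 l
      rw [h5] at this
      rw [one_pow] at this
      exact this.symm
    rw [h2, mul_one] at h1
    rw [← h1]
    refine Finset.sum_congr rfl fun j _ => ?_
    rw [hb2 j _ hTl]
  have hup : ∀ j, ∑ l, ‖∑ k, e (w l) k * b j k‖ ^ 2 ≤ N / 2 := by
    intro j
    let B : EuclideanSpace ℂ K := WithLp.toLp 2 (fun k => (starRingEnd ℂ) (b j k))
    have h1 := hw.sum_inner_products_le B (s := Finset.univ)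
    have h2 : ‖B‖ ^ 2 ≤ N / 2 := by
      rw [EuclideanSpace.norm_sq_eq]
      calc _ ≤ ∑ k : K, (1 / 2 : ℝ) := by
            refine Finset.sum_le_sum fun k _ => ?_
            have : ‖B.ofLp k‖ = ‖b j k‖ := by simp [B]
            rw [this]
            calc _ ≤ (1 / √2) ^ 2 := by gcongr; exact hb1 j k
              _ = 1 / 2 := by rw [div_pow, Real.sq_sqrt (by norm_num)]; norm_num
        _ = N / 2 := by simp [hN]; ring
    refine le_trans (le_of_eq ?_) (h1.trans h2)
    refine Finset.sum_congr rfl fun l _ => ?_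
    rw [← RCLike.norm_conj]
    congr 2
    rw [map_sum, PiLp.inner_apply]
    refine Finset.sum_congr rfl fun k _ => ?_
    simp [B, e, mul_comm]
  have h1 : (m : ℝ) * N ≤ N * (N / 2) := by
    calc (m : ℝ) * N = ∑ l : Fin m, ∑ j, ‖∑ k, e (w l) k * b j k‖ ^ 2 := by
          simp [hlow]
      _ = ∑ j, ∑ l : Fin m, ‖∑ k, e (w l) k * b j k‖ ^ 2 := Finset.sum_comm
      _ ≤ ∑ j : K, (N / 2 : ℝ) := Finset.sum_le_sum fun j _ => hup j
      _ = _ := by simp [hN]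
  have hNpos : (0 : ℝ) < N := by exact_mod_cast (by omega : 0 < N)
  have h2 : (m : ℝ) ≤ N / 2 := by
    rw [mul_comm] at h1
    exact le_of_mul_le_mul_left h1 hNpos
  have h3 : (N : ℝ) ≤ n + m := by exact_mod_cast hdim
  have h4 : 2 * (n : ℝ) < N := by exact_mod_cast hn
  linarith

def frq {d : ℕ} (k : Fin d → Fin 5) : Fin d → ℤ := fun i => ((k i : ℕ) : ℤ) - 2

def pnt {d : ℕ} (j : Fin d → Fin 5) : Fin d → ℝ := fun i => (((j i : ℕ) : ℝ) + 1 / 2) / 5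

lemma frq_inj {d : ℕ} : Function.Injective (frq (d := d)) := by
  intro a b h
  ext i
  have := congrFun h i
  simp only [frq] at this
  omega

lemma eK_prod (d : ℕ) (k : Fin d → ℤ) (x : Fin d → ℝ) :
    eK d k x = ∏ i, Complex.exp (2 * Real.pi * Complex.I * ((k i : ℂ) * (x i : ℂ))) := by
  rw [eK, Finset.mul_sum, Complex.exp_sum]

lemma eK_conj (d : ℕ) (k : Fin d → ℤ) (x : Fin d → ℝ) :
    (starRingEnd ℂ) (eK d k x) = eK d (-k) x := by
  rw [eK, eK, ← Complex.exp_conj]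
  congr 1
  simp [Complex.conj_ofNat]

lemma eK_mul (d : ℕ) (k l : Fin d → ℤ) (x : Fin d → ℝ) :
    eK d k x * eK d l x = eK d (k + l) x := by
  rw [eK, eK, eK, ← Complex.exp_add, ← mul_add, ← Finset.sum_add_distrib]
  congr 2
  refine Finset.sum_congr rfl fun i _ => ?_
  simp; ring

lemma one_dim_sum (a b : Fin 5) :
    ∑ j : Fin 5, Complex.exp (2 * Real.pi * Complex.I *
      (((-(((a : ℕ) : ℤ) - 2) + (((b : ℕ) : ℤ) - 2) : ℤ) : ℂ) *
        (((((j : ℕ) : ℝ) + 1 / 2) / 5 : ℝ) : ℂ)))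
      = if a = b then 5 else 0 := by
  by_cases hab : a = b
  · subst hab; simp
  · rw [if_neg hab]
    set m : ℤ := -(((a : ℕ) : ℤ) - 2) + (((b : ℕ) : ℤ) - 2) with hm
    have hm0 : ¬ (5 : ℤ) ∣ m := by
      have : (a : ℕ) ≠ b := fun h => hab (Fin.ext h)
      omega
    set z : ℂ := Complex.exp (2 * Real.pi * Complex.I * (m / 5)) with hz
    have hterm : ∀ j : Fin 5, Complex.exp (2 * Real.pi * Complex.I *
      ((m : ℂ) * (((((j : ℕ) : ℝ) + 1 / 2) / 5 : ℝ) : ℂ)))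
        = Complex.exp (2 * Real.pi * Complex.I * (m / 10)) * z ^ (j : ℕ) := by
      intro j
      rw [hz, ← Complex.exp_nat_mul, ← Complex.exp_add]
      congr 1
      push_cast
      ring
    simp only [hterm]
    rw [← Finset.mul_sum, Fin.sum_univ_eq_sum_range (fun i => z ^ i) 5]
    have hz1 : z ≠ 1 := by
      intro h
      rw [hz, Complex.exp_eq_one_iff] at h
      obtain ⟨q, hq⟩ := h
      apply hm0
      refine ⟨q, ?_⟩
      have h2 : (2 * Real.pi * Complex.I : ℂ) ≠ 0 := Complex.two_pi_I_ne_zero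
      have h3 : (m / 5 : ℂ) = q := by
        apply mul_left_cancel₀ h2
        rw [hq]; ring
      have h4 : (m : ℂ) = 5 * q := by rw [← h3]; ring
      exact_mod_cast h4
    have hz5 : z ^ 5 = 1 := by
      rw [hz, ← Complex.exp_nat_mul, Complex.exp_eq_one_iff]
      exact ⟨m, by push_cast; ring⟩
    rw [geom_sum_eq hz1, hz5]
    simp

lemma orth_aux {d : ℕ} (k l : Fin d → Fin 5) :
    ∑ j : Fin d → Fin 5, (starRingEnd ℂ) (eK d (frq k) (pnt j)) * eK d (frq l) (pnt j)
      = if k = l then (Fintype.card (Fin d → Fin 5) : ℂ) else 0 := by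
  simp only [eK_conj, eK_mul]
  simp only [eK_prod]
  have := (Finset.prod_univ_sum (fun _ : Fin d => (Finset.univ : Finset (Fin 5)))
    (fun i j => Complex.exp (2 * Real.pi * Complex.I *
      (((-(((k i : ℕ) : ℤ) - 2) + (((l i : ℕ) : ℤ) - 2) : ℤ) : ℂ) *
        (((((j : ℕ) : ℝ) + 1 / 2) / 5 : ℝ) : ℂ))))).symm
  rw [Fintype.piFinset_univ] at this
  refine Eq.trans this ?_
  simp only [one_dim_sum]
  by_cases h : k = l
  · subst h; simp
  · rw [if_neg h]
    obtain ⟨i, hi⟩ := Function.ne_iff.1 h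
    exact Finset.prod_eq_zero (Finset.mem_univ i) (if_neg hi)

lemma one_dim_int (m : ℤ) :
    ∫ x in Set.Icc (0:ℝ) 1, Complex.exp (2 * Real.pi * Complex.I * ((m : ℂ) * (x : ℂ)))
      = if m = 0 then 1 else 0 := by
  by_cases h : m = 0
  · subst h; simp
  · rw [if_neg h, integral_Icc_eq_integral_Ioc, ← intervalIntegral.integral_of_le zero_le_one]
    have hc : (2 * Real.pi * Complex.I * m : ℂ) ≠ 0 :=
      mul_ne_zero Complex.two_pi_I_ne_zero (by exact_mod_cast h)
    simp only [← mul_assoc]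
    rw [integral_exp_mul_complex hc]
    have : Complex.exp (2 * Real.pi * Complex.I * m * (1:ℝ)) = 1 := by
      rw [Complex.exp_eq_one_iff]; exact ⟨m, by push_cast; ring⟩
    rw [this]; simp

lemma int_eK (d : ℕ) (m : Fin d → ℤ) :
    ∫ x in cube d, eK d m x = if m = 0 then 1 else 0 := by
  simp only [eK_prod]
  rw [cube, volume_pi, Measure.restrict_pi_pi,
    integral_fintype_prod_eq_prod (f := fun i (x : ℝ) =>
      Complex.exp (2 * Real.pi * Complex.I * ((m i : ℂ) * (x : ℂ))))]
  simp only [one_dim_int]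
  by_cases h : m = 0
  · subst h; simp
  · rw [if_neg h]
    obtain ⟨i, hi⟩ := Function.ne_iff.1 h
    exact Finset.prod_eq_zero (Finset.mem_univ i) (if_neg hi)

lemma eK_cont (d : ℕ) (k : Fin d → ℤ) : Continuous (eK d k) := by
  unfold eK; fun_prop

lemma eK_per (d : ℕ) (k : Fin d → ℤ) : Periodic1 d (eK d k) := by
  intro x i
  rw [eK_prod, eK_prod]
  refine Finset.prod_congr rfl fun l _ => ?_
  by_cases h : l = i
  · subst h
    rw [Function.update_self, Complex.exp_eq_exp_iff_exists_int]
    exact ⟨k l, by push_cast; ring⟩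
  · rw [Function.update_of_ne h]

lemma cube_compact (d : ℕ) : IsCompact (cube d) := isCompact_univ_pi fun _ => isCompact_Icc

def poly (d : ℕ) (c : (Fin d → Fin 5) → ℂ) : (Fin d → ℝ) → ℂ := ∑ k, c k • eK d (frq k)

lemma poly_apply (d : ℕ) (c : (Fin d → Fin 5) → ℂ) (x : Fin d → ℝ) :
    poly d c x = ∑ k, c k * eK d (frq k) x := by simp [poly]

lemma poly_cont (d : ℕ) (c) : Continuous (poly d c) := by
  have : poly d c = fun x => ∑ k, c k * eK d (frq k) x := funext (poly_apply d c)
  rw [this]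
  exact continuous_finsetSum _ fun k _ => continuous_const.mul (eK_cont d _)

lemma poly_coeff (d : ℕ) (c) (m : Fin d → ℤ) :
    fCoeff d (poly d c) m = ∑ k, if frq k = m then c k else 0 := by
  have h1 : ∀ x, poly d c x * Complex.exp (-(2 * Real.pi * Complex.I) *
      ∑ i, (m i : ℂ) * (x i : ℂ)) = ∑ k, c k * eK d (frq k + -m) x := by
    intro x
    have : Complex.exp (-(2 * Real.pi * Complex.I) * ∑ i, (m i : ℂ) * (x i : ℂ)) = eK d (-m) x := by
      rw [eK]; congr 1; simp
    rw [this, poly_apply, Finset.sum_mul]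
    refine Finset.sum_congr rfl fun k _ => ?_
    rw [mul_assoc, eK_mul]
  rw [fCoeff]
  simp only [h1]
  rw [integral_finsetSum]
  · refine Finset.sum_congr rfl fun k _ => ?_
    rw [integral_const_mul, int_eK]
    by_cases h : frq k = m
    · simp [h]
    · rw [if_neg h, if_neg (fun h' => h (add_neg_eq_zero.1 h')), mul_zero]
  · intro k _
    exact (continuous_const.mul (eK_cont d _)).continuousOn.integrableOn_compact (cube_compact d)

lemma logWeight_frq {d : ℕ} (k : Fin d → Fin 5) : logWeight d (frq k) = 1 := by
  rw [logWeight]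
  apply max_eq_left
  have h : (Finset.univ.sup fun i => (frq k i).natAbs) ≤ 2 := by
    refine Finset.sup_le fun i _ => ?_
    simp only [frq]; omega
  have h2 : (((Finset.univ.sup fun i => (frq k i).natAbs : ℕ)) : ℝ) ≤ 2 := by exact_mod_cast h
  rcases (Nat.cast_nonneg (α := ℝ) (Finset.univ.sup fun i => (frq k i).natAbs)).lt_or_eq with h0 | h0
  · have := Real.log_le_sub_one_of_pos h0
    linarith
  · rw [← h0]; simp

lemma poly_mem (d : ℕ) (c : (Fin d → Fin 5) → ℂ) (hc : ∑ k, ‖c k‖ ≤ 1) :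
    poly d c ∈ FdLog d := by
  have hsupp : ∀ m ∉ Finset.univ.image (frq (d := d)),
      ‖fCoeff d (poly d c) m‖ * logWeight d m = 0 := by
    intro m hm
    rw [poly_coeff, Finset.sum_eq_zero]
    · simp
    · intro k _
      rw [if_neg]
      rintro rfl
      exact hm (Finset.mem_image_of_mem _ (Finset.mem_univ _))
  refine ⟨poly_cont d c, ?_, summable_of_ne_finset_zero hsupp, ?_⟩
  · intro x i
    rw [poly_apply, poly_apply]
    exact Finset.sum_congr rfl fun k _ => by rw [eK_per]
  · rw [tsum_eq_sum hsupp, Finset.sum_image (fun a _ b _ h => frq_inj h)]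
    refine le_trans (le_of_eq ?_) hc
    refine Finset.sum_congr rfl fun k _ => ?_
    rw [logWeight_frq, mul_one, poly_coeff, Finset.sum_eq_single k]
    · simp
    · intro b _ hb
      exact if_neg fun h => hb (frq_inj h)
    · simp

lemma infoVec_zero {V : Type*} [AddCommGroup V] [Module ℂ V] {n : ℕ}
    (L : (i : Fin n) → (Fin i.1 → ℂ) → (V →ₗ[ℂ] ℂ)) (f : V)
    (h : ∀ i, L i 0 f = 0) : ∀ i, infoVec L f i = 0 := by
  have : ∀ (q : ℕ) (hq : q < n), infoVec L f ⟨q, hq⟩ = 0 := by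
    intro q
    induction q using Nat.strong_induction_on with
    | _ q ih =>
      intro hq
      rw [infoVec]
      have : (fun j : Fin q => infoVec L f ⟨j.1, j.2.trans hq⟩) = 0 := by
        funext j
        exact ih j.1 j.2 _
      exact (congrArg (fun v => L ⟨q, hq⟩ v f) this).trans (h _)
  exact fun i => this i.1 i.2

lemma poly_lin (d : ℕ) : ∃ S : ((Fin d → Fin 5) → ℂ) →ₗ[ℂ] ((Fin d → ℝ) → ℂ),
    ∀ c, S c = poly d c := by
  refine ⟨∑ k, (LinearMap.proj k).smulRight (eK d (frq k)), fun c => ?_⟩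
  simp [poly]

lemma main_part (d n : ℕ) (hn : (n : ℝ) ≤ 5 ^ d / 2)
    (L : (i : Fin n) → (Fin i.1 → ℂ) → (((Fin d → ℝ) → ℂ) →ₗ[ℂ] ℂ))
    (φ : (Fin n → ℂ) → ((Fin d → ℝ) → ℂ)) :
    ∃ f ∈ FdLog d,
      ENNReal.ofReal (1 / Real.sqrt 2) ≤
        eLpNorm (fun t => f t - φ (infoVec L f) t) ⊤ (volume.restrict (cube d)) := by
  obtain ⟨S, hS⟩ := poly_lin d
  have hcard : 2 * n < Fintype.card (Fin d → Fin 5) := by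
    have h1 : 2 * n ≤ 5 ^ d := by
      have : (2 * n : ℝ) ≤ 5 ^ d := by linarith
      exact_mod_cast this
    have h2 : Odd (5 ^ d) := Odd.pow (by decide)
    obtain ⟨q, hq⟩ := h2
    simp only [Fintype.card_fun, Fintype.card_fin]
    omega
  obtain ⟨c0, hT0, j, hj⟩ := width_aux (fun j k => eK d (frq k) (pnt j)) orth_aux
    (LinearMap.pi (fun i => (L i 0) ∘ₗ S)) hcard
  set s := ∑ k, ‖c0 k‖ with hs
  have hs0 : 0 < s := by
    rcases (Finset.sum_nonneg fun k _ => norm_nonneg (c0 k) : 0 ≤ s).lt_or_eq with h | h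
    · exact h
    · exfalso
      have : ∀ k, c0 k = 0 := by
        intro k
        have := (Finset.sum_eq_zero_iff_of_nonneg (fun k _ => norm_nonneg (c0 k))).1 h.symm k
          (Finset.mem_univ k)
        simpa using this
      rw [hs, ← h] at hj
      simp [this] at hj
  set c : (Fin d → Fin 5) → ℂ := ((s⁻¹ : ℝ) : ℂ) • c0 with hc
  have hcn : ∑ k, ‖c k‖ = 1 := by
    simp only [hc, Pi.smul_apply, smul_eq_mul, norm_mul, Complex.norm_real, Real.norm_eq_abs]
    rw [← Finset.mul_sum, ← hs, abs_of_pos (inv_pos.2 hs0), inv_mul_cancel₀ hs0.ne']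
  have hker : ∀ i, L i 0 (poly d c) = 0 := by
    intro i
    have := congrFun hT0 i
    simp only [LinearMap.pi_apply, LinearMap.comp_apply, Pi.zero_apply] at this
    rw [← hS, hc, map_smul, map_smul, this, smul_zero]
  have hneg : poly d (-c) = - poly d c := by rw [← hS, ← hS, map_neg]
  have hbig : 1 / √2 < ‖poly d c (pnt j)‖ := by
    have : poly d c = ((s⁻¹ : ℝ) : ℂ) • poly d c0 := by rw [← hS, ← hS, hc, map_smul]
    rw [this, Pi.smul_apply, norm_smul, poly_apply, Complex.norm_real, Real.norm_eq_abs,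
      abs_of_pos (inv_pos.2 hs0)]
    rw [inv_mul_eq_div, lt_div_iff₀ hs0]
    exact hj
  have hi1 : infoVec L (poly d c) = 0 := funext (infoVec_zero L _ hker)
  have hi2 : infoVec L (poly d (-c)) = 0 := funext (infoVec_zero L _ (fun i => by
    rw [hneg, map_neg, hker, neg_zero]))
  by_contra hcon
  push Not at hcon
  have e1 := hcon _ (poly_mem d c hcn.le)
  have e2 := hcon _ (poly_mem d (-c) (by simpa using hcn.le))
  rw [hi1, eLpNorm_exponent_top] at e1
  rw [hi2, eLpNorm_exponent_top] at e2
  have a1 := ae_lt_of_essSup_lt e1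
  have a2 := ae_lt_of_essSup_lt e2
  have a3 : ∀ᵐ t ∂(volume.restrict (cube d)), ‖poly d c t‖ ≤ 1 / √2 := by
    filter_upwards [a1, a2] with t h1 h2
    rw [← ofReal_norm, ENNReal.ofReal_lt_ofReal_iff (by positivity)] at h1 h2
    rw [hneg, Pi.neg_apply] at h2
    have h3 : (2 : ℂ) * poly d c t = (poly d c t - φ 0 t) - (-poly d c t - φ 0 t) := by ring
    have h4 := norm_sub_le (poly d c t - φ 0 t) (-poly d c t - φ 0 t)
    rw [← h3, norm_mul] at h4
    simp only [Complex.norm_ofNat] at h4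
    linarith
  have hopen : IsOpen ({t | 1 / √2 < ‖poly d c t‖} ∩ Set.univ.pi fun _ : Fin d => Set.Ioo (0:ℝ) 1) :=
    (isOpen_lt continuous_const (poly_cont d c).norm).inter
      (isOpen_set_pi Set.finite_univ fun _ _ => isOpen_Ioo)
  have hne : ({t | 1 / √2 < ‖poly d c t‖} ∩ Set.univ.pi fun _ : Fin d => Set.Ioo (0:ℝ) 1).Nonempty := by
    refine ⟨pnt j, hbig, fun i _ => ?_⟩
    have h5 : ((j i : ℕ) : ℝ) ≤ 4 := by exact_mod_cast (by omega : (j i : ℕ) ≤ 4)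
    have h6 : (0 : ℝ) ≤ ((j i : ℕ) : ℝ) := Nat.cast_nonneg _
    constructor
    · simp only [pnt]; positivity
    · simp only [pnt]; linarith
  have hpos := hopen.measure_pos volume hne
  have hsub : ({t | 1 / √2 < ‖poly d c t‖} ∩ Set.univ.pi fun _ : Fin d => Set.Ioo (0:ℝ) 1) ⊆ cube d :=
    fun t ht => fun i hi => Set.Ioo_subset_Icc_self (ht.2 i hi)
  have h0 : volume.restrict (cube d)
      ({t | 1 / √2 < ‖poly d c t‖} ∩ Set.univ.pi fun _ : Fin d => Set.Ioo (0:ℝ) 1) = 0 := by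
    refine measure_mono_null ?_ (ae_iff.1 a3)
    intro t ht
    exact not_le.2 ht.1
  rw [Measure.restrict_apply hopen.measurableSet, Set.inter_eq_left.2 hsub] at h0
  exact hpos.ne' h0

/-- Corollary `cor:uniform`: recovery in the uniform norm on `F_d^log`
suffers from the curse of dimensionality, even for algorithms using arbitrary adaptive
linear information: whenever `n ≤ 5^d/2`, any algorithm `f ↦ φ(L₁(f),…,Lₙ(f))` built from
adaptively chosen linear functionals has worst-case `L_∞`-error at least `1/√2` on
`F_d^log`; in particular the same holds for any sampling algorithm with `n` points. -/
theorem statement11 :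
    ∀ (d n : ℕ), 1 ≤ d → (n : ℝ) ≤ 5 ^ d / 2 →
      ((∀ (L : (i : Fin n) → (Fin i.1 → ℂ) → (((Fin d → ℝ) → ℂ) →ₗ[ℂ] ℂ))
          (φ : (Fin n → ℂ) → ((Fin d → ℝ) → ℂ)),
          ∃ f ∈ FdLog d,
            ENNReal.ofReal (1 / Real.sqrt 2) ≤
              eLpNorm (fun t => f t - φ (infoVec L f) t) ⊤ (volume.restrict (cube d))) ∧
      (∀ (x : Fin n → (Fin d → ℝ)) (φ : (Fin n → ℂ) → ((Fin d → ℝ) → ℂ)),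
          ∃ f ∈ FdLog d,
            ENNReal.ofReal (1 / Real.sqrt 2) ≤
              eLpNorm (fun t => f t - φ (fun i => f (x i)) t) ⊤ (volume.restrict (cube d)))) := by
  intro d n _ hn
  refine ⟨fun L φ => main_part d n hn L φ, fun x φ => ?_⟩
  obtain ⟨f, hf, h⟩ := main_part d n hn (fun i _ => LinearMap.proj (x i)) φ
  refine ⟨f, hf, ?_⟩
  have : infoVec (fun (i : Fin n) (_ : Fin i.1 → ℂ) =>
      (LinearMap.proj (x i) : ((Fin d → ℝ) → ℂ) →ₗ[ℂ] ℂ)) f = fun i => f (x i) := by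
    funext i
    rw [infoVec]
    rfl
  rwa [this] at h
end
end
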